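/- Assume the Riemann Hypothesis. Then for all x ≥ 10^13, one has Σ_{p ≤ x} (log p)²/p < (log x)²/2 + 3.5402, where the sum runs over prime numbers p ≤ x. -/

import Mathlib

open Complex Metric in
lemma deriv_deriv_eq_circleAverage {G : ℂ → ℂ} {R S : ℝ} {w : ℂ} (hR : 0 < R) (hRS : R < S)
    (hG : DifferentiableOn ℂ G (ball 0 S)) (hw : w ∈ ball (0 : ℂ) R) :
    deriv (deriv G) w = Real.circleAverage (fun z => 2 * z / (z - w) ^ 3 * G z) 0 R := by
  have hsub : closedBall (0 : ℂ) R ⊆ ball 0 S := closedBall_subset_ball hRS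
  have hG1 : DifferentiableOn ℂ (deriv G) (ball 0 S) := hG.deriv isOpen_ball
  have hG2 : DifferentiableOn ℂ (deriv (deriv G)) (ball 0 S) := hG1.deriv isOpen_ball
  have hne : ∀ z ∈ sphere (0 : ℂ) R, z - w ≠ 0 := by
    intro z hz h
    rw [sub_eq_zero.1 h] at hz
    simp only [mem_sphere_iff_norm, mem_ball_iff_norm] at hz hw
    linarith
  have hne0 : ∀ z ∈ sphere (0 : ℂ) R, z ≠ 0 := by
    intro z hz h
    rw [h] at hz
    simp at hz
    linarith
  have hS : ∀ z ∈ sphere (0 : ℂ) R, z ∈ ball (0 : ℂ) S := fun z hz =>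
    hsub (sphere_subset_closedBall hz)
  have hderiv : ∀ z ∈ sphere (0 : ℂ) R, HasDerivAt
      (fun z => (z - w)⁻¹ * deriv G z + ((z - w) ^ 2)⁻¹ * G z)
      ((z - w)⁻¹ * deriv (deriv G) z - 2 * ((z - w) ^ 3)⁻¹ * G z) z := by
    intro z hz
    have hz' := hne z hz
    have h0 : HasDerivAt (fun z : ℂ => z - w) 1 z := (hasDerivAt_id z).sub_const w
    have h1 := (hG.differentiableAt (isOpen_ball.mem_nhds (hS z hz))).hasDerivAt
    have h2 := (hG1.differentiableAt (isOpen_ball.mem_nhds (hS z hz))).hasDerivAt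
    have h3 := ((h0.inv hz').mul h2).add (((h0.pow 2).inv (pow_ne_zero 2 hz')).mul h1)
    refine h3.congr_deriv ?_
    simp only [Pi.inv_apply, Pi.pow_apply]
    field_simp
    ring
  have hcont : ContinuousOn (fun z : ℂ => (z - w)⁻¹) (sphere 0 R) :=
    (continuousOn_id.sub continuousOn_const).inv₀ hne
  have hcont3 : ContinuousOn (fun z : ℂ => ((z - w) ^ 3)⁻¹) (sphere 0 R) :=
    ((continuousOn_id.sub continuousOn_const).pow 3).inv₀ fun z hz => pow_ne_zero 3 (hne z hz)
  have hint0 := circleIntegral.integral_eq_zero_of_hasDerivWithinAt hR.le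
    fun z hz => (hderiv z hz).hasDerivWithinAt
  have hi1 : CircleIntegrable (fun z => (z - w)⁻¹ * deriv (deriv G) z) 0 R :=
    (hcont.mul (hG2.continuousOn.mono hS)).circleIntegrable hR.le
  have hi2 : CircleIntegrable (fun z => 2 * ((z - w) ^ 3)⁻¹ * G z) 0 R :=
    ((continuousOn_const.mul hcont3).mul (hG.continuousOn.mono hS)).circleIntegrable hR.le
  rw [circleIntegral.integral_sub hi1 hi2, sub_eq_zero] at hint0
  have hc := (hG2.mono hsub).circleIntegral_sub_inv_smul hw
  simp only [smul_eq_mul] at hc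
  rw [hc] at hint0
  have hpi : (2 * (Real.pi : ℂ) * I) ≠ 0 := Complex.two_pi_I_ne_zero
  rw [Real.circleAverage_eq_circleIntegral hR.ne']
  have : (∮ z in C(0, R), (z - 0)⁻¹ • (2 * z / (z - w) ^ 3 * G z))
      = ∮ z in C(0, R), 2 * ((z - w) ^ 3)⁻¹ * G z := by
    refine circleIntegral.integral_congr hR.le fun z hz => ?_
    have := hne0 z hz
    have := hne z hz
    simp only [sub_zero, smul_eq_mul]
    field_simp
  rw [this, ← hint0, smul_eq_mul, inv_mul_cancel_left₀ hpi]

open Complex Metric ComplexConjugate in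
lemma circleAverage_kernel_mul_conj {G : ℂ → ℂ} {R S : ℝ} {w : ℂ} (hR : 0 < R) (hRS : R < S)
    (hG : DifferentiableOn ℂ G (ball 0 S)) (hw : w ∈ ball (0 : ℂ) R) :
    Real.circleAverage (fun z => 2 * z / (z - w) ^ 3 * conj (G z)) 0 R = 0 := by
  have hsub : closedBall (0 : ℂ) R ⊆ ball 0 S := closedBall_subset_ball hRS
  have hwn : ‖w‖ < R := by simpa using hw
  have hne : ∀ z ∈ closedBall (0 : ℂ) R, (R : ℂ) ^ 2 - conj w * z ≠ 0 := by
    intro z hz h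
    have h1 : ‖conj w * z‖ = R ^ 2 := by
      rw [← sub_eq_zero.1 h]; simp
    have hz' : ‖z‖ ≤ R := by simpa using hz
    rw [norm_mul, Complex.norm_conj] at h1
    nlinarith [norm_nonneg w, norm_nonneg z]
  set F : ℂ → ℂ := fun z => 2 * R ^ 2 * z ^ 2 / (R ^ 2 - conj w * z) ^ 3 * G z with hF
  have hFd : DifferentiableOn ℂ F (closedBall 0 R) := by
    refine DifferentiableOn.mul (DifferentiableOn.div (by fun_prop) (by fun_prop) ?_) (hG.mono hsub)
    intro z hz
    exact pow_ne_zero 3 (hne z hz)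
  have hmean : Real.circleAverage F 0 R = 0 := by
    rw [DiffContOnCl.circleAverage]
    · simp [hF]
    · rw [abs_of_pos hR]
      exact hFd.diffContOnCl_ball subset_rfl
  have hFi : CircleIntegrable F 0 R :=
    (hFd.continuousOn.mono sphere_subset_closedBall).circleIntegrable hR.le
  have key := ContinuousLinearMap.circleAverage_comp_comm (conjCLE : ℂ →L[ℝ] ℂ) hFi
  rw [hmean, map_zero] at key
  refine (Real.circleAverage_congr_sphere fun z hz => ?_).trans key
  rw [abs_of_pos hR] at hz
  have hzn : ‖z‖ = R := by simpa using hz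
  have hz0 : z ≠ 0 := by
    rw [← norm_pos_iff, hzn]; exact hR
  have hzz : z * conj z = (R : ℂ) ^ 2 := by
    rw [Complex.mul_conj, Complex.normSq_eq_norm_sq, hzn]; push_cast; rfl
  have hzw : z - w ≠ 0 := by
    intro h
    rw [sub_eq_zero.1 h] at hzn
    linarith
  have hcz : conj z ≠ 0 := by simpa using hz0
  simp only [hF, Function.comp_apply, ContinuousLinearEquiv.coe_coe, conjCLE_apply, map_mul,
    map_div₀, map_pow, map_sub, conj_conj, conj_ofReal, map_ofNat]
  congr 1
  rw [← hzz]
  have : z * conj z - w * conj z ≠ 0 := by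
    rw [← sub_mul]; exact mul_ne_zero hzw hcz
  rw [div_eq_div_iff (pow_ne_zero 3 hzw) (pow_ne_zero 3 this)]
  ring

open Complex Metric ComplexConjugate in
lemma norm_deriv_deriv_le_aux {G : ℂ → ℂ} {R S A r : ℝ} {w : ℂ} (hRS : R < S)
    (hG : DifferentiableOn ℂ G (ball 0 S)) (h0 : (G 0).re = 0)
    (hA : ∀ z ∈ ball (0 : ℂ) S, (G z).re ≤ A) (hw : ‖w‖ ≤ r) (hr : r < R) :
    ‖deriv (deriv G) w‖ ≤ 4 * A * R / (R - r) ^ 3 := by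
  have hR : 0 < R := (norm_nonneg w).trans_lt (hw.trans_lt hr)
  have hwb : w ∈ ball (0 : ℂ) R := by simpa using hw.trans_lt hr
  have hS : ∀ z ∈ sphere (0 : ℂ) R, z ∈ ball (0 : ℂ) S := fun z hz =>
    closedBall_subset_ball hRS (sphere_subset_closedBall hz)
  have hne : ∀ z ∈ sphere (0 : ℂ) R, z - w ≠ 0 := by
    intro z hz h
    rw [sub_eq_zero.1 h] at hz
    simp only [mem_sphere_iff_norm, sub_zero] at hz
    linarith
  have hK : ContinuousOn (fun z : ℂ => 2 * z / (z - w) ^ 3) (sphere 0 R) :=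
    (by fun_prop : ContinuousOn (fun z : ℂ => 2 * z) (sphere 0 R)).div
      (by fun_prop) fun z hz => pow_ne_zero 3 (hne z hz)
  have hGc : ContinuousOn G (sphere 0 R) := hG.continuousOn.mono hS
  have hGcc : ContinuousOn (fun z => conj (G z)) (sphere 0 R) :=
    Complex.continuous_conj.comp_continuousOn hGc
  have e1 := deriv_deriv_eq_circleAverage hR hRS hG hwb
  have e2 := circleAverage_kernel_mul_conj hR hRS hG hwb
  have e3 : Real.circleAverage (fun z => 2 * z / (z - w) ^ 3 * ((2 * A : ℝ) : ℂ)) 0 R = 0 := by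
    rw [← deriv_deriv_eq_circleAverage hR hRS (differentiableOn_const _) hwb]
    simp
  have i1 : CircleIntegrable (fun z => 2 * z / (z - w) ^ 3 * G z) 0 R :=
    (hK.mul hGc).circleIntegrable hR.le
  have i2 : CircleIntegrable (fun z => 2 * z / (z - w) ^ 3 * conj (G z)) 0 R :=
    (hK.mul hGcc).circleIntegrable hR.le
  have i3 : CircleIntegrable (fun z => 2 * z / (z - w) ^ 3 * ((2 * A : ℝ) : ℂ)) 0 R :=
    (hK.mul continuousOn_const).circleIntegrable hR.le
  have e4 : deriv (deriv G) w = Real.circleAverage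
      (fun z => 2 * z / (z - w) ^ 3 * G z + 2 * z / (z - w) ^ 3 * conj (G z)
        - 2 * z / (z - w) ^ 3 * ((2 * A : ℝ) : ℂ)) 0 R := by
    have i12 : CircleIntegrable (fun z => 2 * z / (z - w) ^ 3 * G z
        + 2 * z / (z - w) ^ 3 * conj (G z)) 0 R := i1.add i2
    rw [Real.circleAverage_fun_sub i12 i3, Real.circleAverage_fun_add i1 i2, e2, e3, e1]
    simp
  have hmean : Real.circleAverage (fun z => (G z).re) 0 R = 0 := by
    have h1 := Complex.reCLM.circleAverage_comp_comm (hGc.circleIntegrable hR.le)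
    rw [DiffContOnCl.circleAverage] at h1
    · simp only [Complex.reCLM_apply, h0] at h1
      exact h1
    · rw [abs_of_pos hR]
      exact (hG.mono (closedBall_subset_ball hRS)).diffContOnCl_ball subset_rfl
  have hd : 0 < R - r := by linarith
  have ire : CircleIntegrable (fun z => (G z).re) 0 R :=
    (Complex.continuous_re.comp_continuousOn hGc).circleIntegrable hR.le
  have ibd : CircleIntegrable (fun z => (4 * R / (R - r) ^ 3) * (A - (G z).re)) 0 R :=
    (continuousOn_const.mul (continuousOn_const.sub
      (Complex.continuous_re.comp_continuousOn hGc))).circleIntegrable hR.le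
  have hbd : Real.circleAverage (fun z => (4 * R / (R - r) ^ 3) * (A - (G z).re)) 0 R
      = 4 * R / (R - r) ^ 3 * A := by
    have := Real.circleAverage_fun_smul (f := fun z => A - (G z).re) (c := 0) (R := R)
      (a := 4 * R / (R - r) ^ 3)
    simp only [smul_eq_mul] at this
    rw [this, Real.circleAverage_fun_sub (circleIntegrable_const _ _ _) ire, hmean,
      Real.circleAverage_const]
    simp
  have hpt : ∀ z ∈ sphere (0 : ℂ) R, ‖2 * z / (z - w) ^ 3 * G z + 2 * z / (z - w) ^ 3 * conj (G z)
        - 2 * z / (z - w) ^ 3 * ((2 * A : ℝ) : ℂ)‖ ≤ (4 * R / (R - r) ^ 3) * (A - (G z).re) := by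
    intro z hz
    have hzn : ‖z‖ = R := by simpa using hz
    have hz1 : R - r ≤ ‖z - w‖ := by
      have := norm_sub_norm_le z w
      linarith
    have hA' := hA z (hS z hz)
    have : 2 * z / (z - w) ^ 3 * G z + 2 * z / (z - w) ^ 3 * conj (G z)
        - 2 * z / (z - w) ^ 3 * ((2 * A : ℝ) : ℂ)
        = 2 * z / (z - w) ^ 3 * ((2 * (G z).re - 2 * A : ℝ) : ℂ) := by
      have := Complex.add_conj (G z)
      rw [← mul_add, ← mul_sub, this]
      push_cast
      ring
    rw [this, norm_mul, norm_div, norm_mul, norm_pow, hzn, Complex.norm_real,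
      Real.norm_of_nonpos (by linarith), Complex.norm_ofNat]
    have h3 : (R - r) ^ 3 ≤ ‖z - w‖ ^ 3 := by gcongr
    have : 2 * R / ‖z - w‖ ^ 3 ≤ 2 * R / (R - r) ^ 3 := by gcongr
    calc 2 * R / ‖z - w‖ ^ 3 * -(2 * (G z).re - 2 * A)
        ≤ 2 * R / (R - r) ^ 3 * -(2 * (G z).re - 2 * A) := by
          gcongr
          linarith
      _ = _ := by ring
  rw [e4]
  have : ‖Real.circleAverage
      (fun z => 2 * z / (z - w) ^ 3 * G z + 2 * z / (z - w) ^ 3 * conj (G z)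
        - 2 * z / (z - w) ^ 3 * ((2 * A : ℝ) : ℂ)) 0 R‖ ≤
      Real.circleAverage (fun z => (4 * R / (R - r) ^ 3) * (A - (G z).re)) 0 R := by
    rw [Real.circleAverage_def, Real.circleAverage_def, norm_smul, smul_eq_mul,
      Real.norm_of_nonneg (by positivity)]
    gcongr
    refine intervalIntegral.norm_integral_le_of_norm_le (by positivity) ?_ ibd
    exact Filter.Eventually.of_forall fun θ _ => hpt _ (circleMap_mem_sphere _ hR.le _)
  rw [hbd] at this
  exact this.trans_eq (by ring)

open Complex Metric in
/-- A Borel-Carathéodory inequality for the second derivative. -/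
lemma norm_deriv_deriv_le_of_re_le {G : ℂ → ℂ} {R A r : ℝ} {c w : ℂ}
    (hG : DifferentiableOn ℂ G (ball c R)) (h0 : (G c).re = 0)
    (hA : ∀ z ∈ ball c R, (G z).re ≤ A) (hw : ‖w - c‖ ≤ r) (hr : r < R) :
    ‖deriv (deriv G) w‖ ≤ 4 * A * R / (R - r) ^ 3 := by
  set F : ℂ → ℂ := fun z => G (z + c) with hF
  have hm : ∀ z ∈ ball (0 : ℂ) R, z + c ∈ ball c R := by
    intro z hz
    simpa [mem_ball_iff_norm] using hz
  have hFd : DifferentiableOn ℂ F (ball 0 R) :=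
    hG.comp (by fun_prop) hm
  have hF2 : deriv (deriv F) (w - c) = deriv (deriv G) w := by
    have h1 : deriv F = fun z => deriv G (z + c) := by
      ext z; exact deriv_comp_add_const G c z
    rw [h1, deriv_comp_add_const]
    simp
  have key : ∀ R' ∈ Set.Ioo r R, ‖deriv (deriv G) w‖ ≤ 4 * A * R' / (R' - r) ^ 3 := by
    intro R' hR'
    rw [← hF2]
    exact norm_deriv_deriv_le_aux hR'.2 hFd (by simpa [hF] using h0)
      (fun z hz => hA _ (hm z hz)) hw hR'.1
  have hlim : Filter.Tendsto (fun R' => 4 * A * R' / (R' - r) ^ 3) (nhdsWithin R (Set.Iio R))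
      (nhds (4 * A * R / (R - r) ^ 3)) := by
    have : ContinuousAt (fun R' => 4 * A * R' / (R' - r) ^ 3) R :=
      ContinuousAt.div (by fun_prop) (by fun_prop) (pow_ne_zero 3 (sub_ne_zero.2 hr.ne'))
    exact this.tendsto.mono_left nhdsWithin_le_nhds
  refine ge_of_tendsto hlim ?_
  filter_upwards [Ioo_mem_nhdsLT hr] with R' hR' using key R' hR'

section

open Set Filter Asymptotics Complex MeasureTheory

/-- The fractional part on `(1, ∞)`, extended by zero. -/
noncomputable def fractTail : ℝ → ℂ := (Ioi (1 : ℝ)).indicator fun t => ((Int.fract t : ℝ) : ℂ)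

lemma norm_fractTail_le (t : ℝ) : ‖fractTail t‖ ≤ 1 := by
  refine (norm_indicator_le_norm_self _ _).trans ?_
  rw [Complex.norm_real, Real.norm_of_nonneg (Int.fract_nonneg t)]
  exact (Int.fract_lt_one t).le

lemma measurable_fractTail : Measurable fractTail :=
  (Complex.measurable_ofReal.comp measurable_fract).indicator measurableSet_Ioi

lemma locallyIntegrableOn_fractTail : LocallyIntegrableOn fractTail (Ioi 0) := by
  refine LocallyIntegrable.locallyIntegrableOn ?_ _
  exact (locallyIntegrable_const (1 : ℝ)).mono measurable_fractTail.aestronglyMeasurable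
    (Eventually.of_forall fun t => by simpa using norm_fractTail_le t)

lemma fractTail_isBigO_atTop : fractTail =O[atTop] fun t : ℝ => t ^ (-(0 : ℝ)) := by
  refine IsBigO.of_bound 1 (Eventually.of_forall fun t => ?_)
  simpa using norm_fractTail_le t

lemma fractTail_isBigO_zero (b : ℝ) :
    fractTail =O[nhdsWithin 0 (Ioi 0)] fun t : ℝ => t ^ (-b) := by
  refine IsBigO.of_bound 1 ?_
  filter_upwards [Ioo_mem_nhdsGT (zero_lt_one' ℝ)] with t ht
  have : fractTail t = 0 := indicator_of_notMem (by simpa using ht.2.le) _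
  rw [this, norm_zero]
  positivity

lemma mellinConvergent_fractTail {s : ℂ} (hs : s.re < 0) : MellinConvergent fractTail s :=
  mellinConvergent_of_isBigO_rpow locallyIntegrableOn_fractTail fractTail_isBigO_atTop hs
    (fractTail_isBigO_zero (s.re - 1)) (by linarith)

lemma hasDerivAt_mellin_fractTail {s : ℂ} (hs : s.re < 0) :
    MellinConvergent (fun t => Real.log t • fractTail t) s ∧
    HasDerivAt (mellin fractTail) (mellin (fun t => Real.log t • fractTail t) s) s :=
  mellin_hasDerivAt_of_isBigO_rpow locallyIntegrableOn_fractTail fractTail_isBigO_atTop hs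
    (fractTail_isBigO_zero (s.re - 1)) (by linarith)

lemma mellin_fractTail_eq (s : ℂ) :
    mellin fractTail s = ∫ t in Ioi (1 : ℝ), (t : ℂ) ^ (s - 1) * (Int.fract t : ℝ) := by
  have : ∀ t : ℝ, (t : ℂ) ^ (s - 1) • fractTail t =
      (Ioi (1 : ℝ)).indicator (fun t : ℝ => (t : ℂ) ^ (s - 1) * (Int.fract t : ℝ)) t := by
    intro t
    by_cases ht : t ∈ Ioi (1 : ℝ) <;> simp [fractTail, ht]
  simp only [mellin, this]
  rw [setIntegral_indicator measurableSet_Ioi, inter_eq_right.2 (Ioi_subset_Ioi zero_le_one)]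

lemma norm_mellin_fractTail_le {s : ℂ} (hs : s.re < 0) :
    ‖mellin fractTail s‖ ≤ 1 / (-s.re) := by
  rw [mellin_fractTail_eq]
  have hint : IntegrableOn (fun t : ℝ => t ^ (s.re - 1)) (Ioi 1) :=
    integrableOn_Ioi_rpow_of_lt (by linarith) one_pos
  refine (norm_integral_le_of_norm_le hint ?_).trans ?_
  · refine (ae_restrict_iff' measurableSet_Ioi).2 (Eventually.of_forall fun t ht => ?_)
    have ht0 : 0 < t := one_pos.trans ht
    rw [norm_mul, Complex.norm_cpow_eq_rpow_re_of_pos ht0, Complex.norm_real,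
      Real.norm_of_nonneg (Int.fract_nonneg t)]
    simp only [sub_re, one_re]
    exact mul_le_of_le_one_right (by positivity) (Int.fract_lt_one t).le
  · rw [integral_Ioi_rpow_of_lt (by linarith) one_pos]
    simp only [Real.one_rpow, sub_add_cancel]
    rw [← neg_div_neg_eq, neg_neg]

lemma riemannZeta₁_eq_of_one_lt_re {s : ℂ} (hs : 1 < s.re) :
    riemannZeta₁ s = s - s * (s - 1) * mellin fractTail (-s) := by
  have hs1 : s ≠ 1 := by rintro rfl; simp at hs
  have hs1' : s - 1 ≠ 0 := sub_ne_zero.2 hs1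
  have hz := riemannZeta_eq_inv_sub_mul hs1
  have h1 : riemannZeta₁ s = (s - 1) * riemannZeta s := by
    rw [hz, mul_inv_cancel_left₀ hs1']
  have h2 : riemannZeta s = s * ∫ t in Ioi (1 : ℝ),
      (∑ k ∈ Finset.Icc 1 ⌊t⌋₊, (1 : ℕ → ℂ) k) * (t : ℂ) ^ (-(s + 1)) := by
    rw [← LSeries_one_eq_riemannZeta hs]
    refine LSeries_eq_mul_integral 1 zero_le_one hs (LSeriesSummable_one_iff.2 hs) ?_
    refine IsBigO.of_bound 1 (Eventually.of_forall fun n => ?_)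
    simp
  have h3 : ∫ t in Ioi (1 : ℝ), (∑ k ∈ Finset.Icc 1 ⌊t⌋₊, (1 : ℕ → ℂ) k) * (t : ℂ) ^ (-(s + 1))
      = ∫ t in Ioi (1 : ℝ), ((t : ℂ) ^ (-s) - (t : ℂ) ^ (-s - 1) * (Int.fract t : ℝ)) := by
    refine setIntegral_congr_fun measurableSet_Ioi fun t ht => ?_
    have ht0 : 0 < t := one_pos.trans ht
    have e1 : (t : ℂ) ^ (-s) = (t : ℂ) ^ (-s - 1) * t := by
      nth_rewrite 3 [← Complex.cpow_one (t : ℂ)]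
      rw [← Complex.cpow_add _ _ (by exact_mod_cast ht0.ne')]
      simp
    have e2 : ((⌊t⌋₊ : ℕ) : ℂ) = (t : ℂ) - (Int.fract t : ℝ) := by
      have : ((⌊t⌋₊ : ℕ) : ℝ) = t - Int.fract t := by
        rw [natCast_floor_eq_intCast_floor ht0.le, Int.self_sub_fract]
      rw [← Complex.ofReal_natCast, this]
      push_cast
      rfl
    have e3 : -(s + 1) = -s - 1 := by ring
    simp only [Pi.one_apply, Finset.sum_const, Nat.card_Icc, add_tsub_cancel_right, nsmul_eq_mul,
      mul_one]
    rw [e1, e2, e3]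
    ring
  have hi1 : IntegrableOn (fun t : ℝ => (t : ℂ) ^ (-s)) (Ioi 1) :=
    integrableOn_Ioi_cpow_of_lt (by simpa using hs) one_pos
  have hi2 : IntegrableOn (fun t : ℝ => (t : ℂ) ^ (-s - 1) * (Int.fract t : ℝ)) (Ioi 1) := by
    have := (mellinConvergent_fractTail (s := -s) (by simp; linarith)).mono_set
      (Ioi_subset_Ioi zero_le_one)
    refine this.congr_fun (fun t ht => ?_) measurableSet_Ioi
    simp [fractTail, mem_Ioi.1 ht]
  rw [h1, h2, h3, integral_sub hi1 hi2, mellin_fractTail_eq,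
    integral_Ioi_cpow_of_lt (by simpa using hs) one_pos]
  have hs1'' : -s + 1 ≠ 0 := by
    intro h; apply hs1'; linear_combination -h
  simp only [ofReal_one, one_cpow]
  field_simp
  ring

lemma riemannZeta₁_eq {s : ℂ} (hs : 0 < s.re) :
    riemannZeta₁ s = s - s * (s - 1) * mellin fractTail (-s) := by
  set U : Set ℂ := {z | 0 < z.re}
  have hU : IsOpen U := isOpen_lt continuous_const continuous_re
  have hUc : IsPreconnected U := (convex_halfSpace_re_gt 0).isPreconnected
  have hd : DifferentiableOn ℂ (fun s => s - s * (s - 1) * mellin fractTail (-s)) U := by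
    intro z (hz : 0 < z.re)
    have : DifferentiableAt ℂ (mellin fractTail) (-z) :=
      (hasDerivAt_mellin_fractTail (s := -z) (by simpa using hz)).2.differentiableAt
    have h2 : DifferentiableAt ℂ (fun s => mellin fractTail (-s)) z :=
      this.comp z differentiableAt_id.neg
    exact (by fun_prop : DifferentiableAt ℂ _ z).differentiableWithinAt
  refine AnalyticOnNhd.eqOn_of_preconnected_of_eventuallyEq
    (differentiable_riemannZeta₁.differentiableOn.analyticOnNhd hU) (hd.analyticOnNhd hU) hUc (z₀ := 2) (by simp [U]) ?_ hs
  have : {z : ℂ | 1 < z.re} ∈ nhds (2 : ℂ) :=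
    (isOpen_lt continuous_const continuous_re).mem_nhds (by simp)
  filter_upwards [this] with z hz using riemannZeta₁_eq_of_one_lt_re hz

lemma norm_riemannZeta₁_le {s : ℂ} (hs : 1 / 2 ≤ s.re) :
    ‖riemannZeta₁ s‖ ≤ ‖s‖ * (1 + 2 * ‖s - 1‖) := by
  rw [riemannZeta₁_eq (by linarith)]
  have h := norm_mellin_fractTail_le (s := -s) (by simp; linarith)
  have h' : ‖mellin fractTail (-s)‖ ≤ 2 := by
    refine h.trans ?_
    simp only [neg_re, neg_neg]
    rw [div_le_iff₀ (by linarith)]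
    linarith
  have : s - s * (s - 1) * mellin fractTail (-s) = s * (1 - (s - 1) * mellin fractTail (-s)) := by
    ring
  rw [this, norm_mul]
  gcongr
  refine (norm_sub_le _ _).trans ?_
  rw [norm_one, norm_mul, mul_comm ‖s - 1‖]
  gcongr

lemma riemannZeta_three_halves_re_le : (riemannZeta (3 / 2)).re ≤ 3 := by
  have h1 : (1 : ℝ) < (3 / 2 : ℂ).re := by norm_num
  have hm : 0 ≤ (mellin fractTail (-(3 / 2))).re := by
    rw [mellin_fractTail_eq]
    have : ∀ t ∈ Ioi (1 : ℝ), (t : ℂ) ^ (-(3 / 2 : ℂ) - 1) * (Int.fract t : ℝ)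
        = ((t ^ (-(3 / 2 : ℝ) - 1) * Int.fract t : ℝ) : ℂ) := by
      intro t ht
      rw [ofReal_mul, ofReal_cpow (one_pos.trans ht).le]
      push_cast
      rfl
    rw [setIntegral_congr_fun measurableSet_Ioi this, integral_complex_ofReal, ofReal_re]
    refine setIntegral_nonneg measurableSet_Ioi fun t ht => ?_
    have : (0 : ℝ) < t := one_pos.trans ht
    exact mul_nonneg (by positivity) (Int.fract_nonneg t)
  rw [riemannZeta_eq_inv_sub_mul (by norm_num), riemannZeta₁_eq_of_one_lt_re h1]
  have : (3 / 2 - 1 : ℂ)⁻¹ * (3 / 2 - 3 / 2 * (3 / 2 - 1) * mellin fractTail (-(3 / 2)))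
      = (3 : ℝ) - (3 / 2 : ℝ) * mellin fractTail (-(3 / 2)) := by
    push_cast
    ring
  rw [this, sub_re, re_ofReal_mul, ofReal_re]
  linarith

lemma one_third_le_norm_riemannZeta {s : ℂ} (hs : s.re = 3 / 2) : 1 / 3 ≤ ‖riemannZeta s‖ := by
  have h1 : 1 < s.re := by rw [hs]; norm_num
  have hmul := LSeries_one_mul_Lseries_moebius h1
  rw [LSeries_one_eq_riemannZeta h1] at hmul
  have h32 : (1 : ℝ) < (3 / 2 : ℂ).re := by norm_num
  have hsum := (LSeriesHasSum_one h32)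
  have hsumr := Complex.hasSum_re hsum
  have hterm : ∀ n, ‖LSeries.term (fun n => ((ArithmeticFunction.moebius n : ℤ) : ℂ)) s n‖ ≤
      (LSeries.term 1 (3 / 2) n).re := by
    intro n
    rcases eq_or_ne n 0 with rfl | hn
    · simp
    · have hn' : 0 < n := Nat.pos_of_ne_zero hn
      have e : (LSeries.term 1 (3 / 2) n) = ((1 / (n : ℝ) ^ (3 / 2 : ℝ) : ℝ) : ℂ) := by
        rw [LSeries.term_of_ne_zero hn, ofReal_div, ofReal_cpow (Nat.cast_nonneg n)]
        push_cast
        rfl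
      rw [e, ofReal_re, LSeries.term_of_ne_zero hn, norm_div, Complex.norm_natCast_cpow_of_pos hn',
        hs]
      gcongr
      have : |(ArithmeticFunction.moebius n : ℤ)| ≤ 1 := ArithmeticFunction.abs_moebius_le_one
      rw [Complex.norm_intCast]
      exact_mod_cast this
  have hle : ‖LSeries (fun n => ((ArithmeticFunction.moebius n : ℤ) : ℂ)) s‖ ≤ 3 := by
    rw [LSeries]
    exact (tsum_of_norm_bounded hsumr hterm).trans riemannZeta_three_halves_re_le
  have h3 := congrArg norm hmul
  rw [norm_mul, norm_one] at h3
  nlinarith [norm_nonneg (riemannZeta s)]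

lemma riemannZeta₁_eq_sub_mul {s : ℂ} (hs : s ≠ 1) :
    riemannZeta₁ s = (s - 1) * riemannZeta s := by
  rw [riemannZeta_eq_inv_sub_mul hs, mul_inv_cancel_left₀ (sub_ne_zero.2 hs)]

lemma riemannZeta₁_ne_zero (hRH : RiemannHypothesis) {s : ℂ} (hs : 1 / 2 < s.re) :
    riemannZeta₁ s ≠ 0 := by
  rcases eq_or_ne s 1 with rfl | h1
  · simp
  rw [riemannZeta₁_eq_sub_mul h1]
  refine mul_ne_zero (sub_ne_zero.2 h1) fun h0 => ?_
  refine hs.ne' (hRH s h0 ?_ h1)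
  rintro ⟨n, rfl⟩
  have : (-2 * ((n : ℂ) + 1)).re = -2 * (n + 1) := by simp
  rw [this] at hs
  have : (0 : ℝ) ≤ n := Nat.cast_nonneg n
  linarith

lemma log_sixty_mul_le {τ : ℝ} (hτ : 1 ≤ τ) : Real.log (60 * τ) ≤ 4.1 * τ ^ (1 / 4 : ℝ) := by
  have hq : 1 ≤ τ ^ (1 / 4 : ℝ) := Real.one_le_rpow hτ (by norm_num)
  have h60 : Real.log 60 ≤ 4.1 := by
    have e : (60 : ℝ) = 2 ^ 6 * (15 / 16) := by norm_num
    rw [e, Real.log_mul (by norm_num) (by norm_num), Real.log_pow]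
    have := Real.log_le_sub_one_of_pos (show (0 : ℝ) < 15 / 16 by norm_num)
    have := Real.log_two_lt_d9
    push_cast
    linarith
  have hl : Real.log τ = 4 * Real.log (τ ^ (1 / 4 : ℝ)) := by
    rw [Real.log_rpow (by linarith)]
    ring
  have := Real.log_le_sub_one_of_pos (show (0 : ℝ) < τ ^ (1 / 4 : ℝ) by linarith)
  rw [Real.log_mul (by norm_num) (by linarith), hl]
  linarith

open Metric in
lemma exists_log_of_ne_zero {f : ℂ → ℂ} (hf : Differentiable ℂ f) {c : ℂ} {R : ℝ} (hR : 0 < R)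
    (h0 : ∀ z ∈ ball c R, f z ≠ 0) :
    ∃ G : ℂ → ℂ, (∀ z ∈ ball c R, HasDerivAt G (logDeriv f z) z) ∧ G c = 0 ∧
      ∀ z ∈ ball c R, f z = f c * exp (G z) := by
  have hld : DifferentiableOn ℂ (logDeriv f) (ball c R) := by
    intro z hz
    have h1 : DifferentiableAt ℂ (deriv f) z :=
      (hf.differentiableOn.deriv isOpen_univ).differentiableAt univ_mem
    exact (h1.div (hf z) (h0 z hz)).differentiableWithinAt
  obtain ⟨g, hg⟩ := hld.isExactOn_ball
  have hc : c ∈ ball c R := mem_ball_self hR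
  refine ⟨fun z => g z - g c, fun z hz => (hg z hz).sub_const _, sub_self _, fun z hz => ?_⟩
  have hconst : ∀ z ∈ ball c R, HasDerivAt (fun z => f z * exp (-(g z - g c))) 0 z := by
    intro z hz
    have := (hf z).hasDerivAt.mul ((((hg z hz).sub_const (g c)).neg).cexp)
    refine this.congr_deriv ?_
    rw [logDeriv_apply]
    field_simp [h0 z hz]
    ring
  have := (convex_ball c R).is_const_of_fderivWithin_eq_zero (𝕜 := ℂ)
    (f := fun z => f z * exp (-(g z - g c)))
    (fun z hz => (hconst z hz).differentiableAt.differentiableWithinAt)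
    (fun z hz => by
      rw [fderivWithin_of_isOpen isOpen_ball hz, (hconst z hz).hasFDerivAt.fderiv]
      ext; simp) hz hc
  simp only [sub_self, neg_zero, exp_zero, mul_one] at this
  rw [← this, mul_assoc, ← exp_add]
  simp

open Metric in
lemma norm_deriv_logDeriv_riemannZeta₁_le (hRH : RiemannHypothesis) {s : ℂ} {r : ℝ} (hr : r < 1)
    (hs : |s.re - 3 / 2| ≤ r) :
    ‖deriv (logDeriv riemannZeta₁) s‖ ≤
      4 * (4.1 * (max 1 |s.im|) ^ (1 / 4 : ℝ)) / (1 - r) ^ 3 := by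
  set c : ℂ := ⟨3 / 2, s.im⟩ with hc
  set τ := max 1 |s.im| with hτ
  have hre : ∀ z ∈ ball c 1, 1 / 2 < z.re := by
    intro z hz
    have h1 := (abs_re_le_norm (z - c)).trans_lt (mem_ball_iff_norm.1 hz)
    simp only [sub_re, hc, abs_lt] at h1
    linarith [h1.1]
  have hne : ∀ z ∈ ball c 1, riemannZeta₁ z ≠ 0 := fun z hz =>
    riemannZeta₁_ne_zero hRH (hre z hz)
  obtain ⟨G, hG, hGc, hexp⟩ := exists_log_of_ne_zero differentiable_riemannZeta₁ one_pos hne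
  have hcc : c ∈ ball c 1 := mem_ball_self one_pos
  have hsc : ‖s - c‖ ≤ r := by
    have : s - c = ((s.re - 3 / 2 : ℝ) : ℂ) := by
      apply Complex.ext <;> simp [hc]
    rw [this, Complex.norm_real]
    exact hs
  have hsb : s ∈ ball c 1 := mem_ball_iff_norm.2 (hsc.trans_lt hr)
  have hA : ∀ z ∈ ball c 1, (G z).re ≤ 4.1 * τ ^ (1 / 4 : ℝ) := by
    intro z hz
    refine le_trans ?_ (log_sixty_mul_le (le_max_left _ _))
    have hfc : 0 < ‖riemannZeta₁ c‖ := norm_pos_iff.2 (hne c hcc)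
    have h1 := congrArg norm (hexp z hz)
    rw [norm_mul, norm_exp] at h1
    have hτ1 : 1 ≤ τ := le_max_left _ _
    rw [Real.le_log_iff_exp_le (by linarith)]
    set w := ‖c - 1‖ with hw
    have hc1 : c ≠ 1 := fun h => by
      have := congrArg re h
      simp [hc] at this
      norm_num at this
    have hfc' : w * (1 / 3) ≤ ‖riemannZeta₁ c‖ := by
      rw [riemannZeta₁_eq_sub_mul hc1, norm_mul]
      gcongr
      exact one_third_le_norm_riemannZeta rfl
    have hz1 : ‖z - 1‖ ≤ w + 1 := by
      have := norm_sub_le_norm_sub_add_norm_sub z c 1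
      have := mem_ball_iff_norm.1 hz
      linarith
    have hz0 : ‖z‖ ≤ w + 2 := by
      have := norm_add_le (z - 1) 1
      rw [sub_add_cancel, norm_one] at this
      linarith
    have hfz := norm_riemannZeta₁_le (hre z hz).le
    have hfz' : ‖riemannZeta₁ z‖ ≤ (w + 2) * (1 + 2 * (w + 1)) := hfz.trans (by gcongr)
    have hwre : 1 / 2 ≤ w := by
      have := abs_re_le_norm (c - 1)
      rw [sub_re, one_re] at this
      refine le_trans ?_ this
      simp only [hc]
      norm_num
    have hwim : |s.im| ≤ w := by
      simpa [hc] using abs_im_le_norm (c - 1)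
    have hwle : w ≤ 1 / 2 + |s.im| := by
      have := norm_le_abs_re_add_abs_im (c - 1)
      refine this.trans (le_of_eq ?_)
      simp only [hc, sub_re, one_re, sub_im, one_im, sub_zero]
      norm_num
    have hfin : (w + 2) * (1 + 2 * (w + 1)) ≤ w * (1 / 3) * (60 * τ) := by
      rcases le_total |s.im| 1 with h | h
      · rw [hτ, max_eq_left h]
        nlinarith
      · rw [hτ, max_eq_right h]
        nlinarith
    have : ‖riemannZeta₁ c‖ * Real.exp (G z).re ≤ ‖riemannZeta₁ c‖ * (60 * τ) := by
      rw [← h1]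
      refine hfz'.trans (hfin.trans ?_)
      gcongr
    exact le_of_mul_le_mul_left this hfc
  have key := norm_deriv_deriv_le_of_re_le (w := s) (r := r)
    (fun z hz => (hG z hz).differentiableAt.differentiableWithinAt) (by rw [hGc]; simp) hA hsc hr
  have hdd : deriv (deriv G) s = deriv (logDeriv riemannZeta₁) s := by
    refine Filter.EventuallyEq.deriv_eq ?_
    filter_upwards [isOpen_ball.mem_nhds hsb] with z hz using (hG z hz).deriv
  rw [hdd, mul_one] at key
  exact key

/-- The function `x ↦ (log x) ^ k` on `(0, 1]`, extended by zero. -/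
noncomputable def logPowUnit (k : ℕ) : ℝ → ℂ :=
  (Ioc (0 : ℝ) 1).indicator fun x => ((Real.log x ^ k : ℝ) : ℂ)

lemma log_smul_logPowUnit (k : ℕ) :
    (fun x => Real.log x • logPowUnit k x) = logPowUnit (k + 1) := by
  ext x
  by_cases h : x ∈ Ioc (0 : ℝ) 1
  · simp only [logPowUnit, indicator_of_mem h, real_smul]
    push_cast
    ring
  · simp only [logPowUnit, indicator_of_notMem h, smul_zero]

lemma logPowUnit_isBigO_zero (k : ℕ) {b : ℝ} (hb : 0 < b) :
    logPowUnit k =O[nhdsWithin 0 (Ioi 0)] fun t : ℝ => t ^ (-b) := by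
  have h := (isLittleO_abs_log_rpow_rpow_nhdsGT_zero (k : ℝ) (neg_neg_of_pos hb)).isBigO
  refine (IsBigO.of_bound 1 (Eventually.of_forall fun x => ?_)).trans h
  rw [one_mul, Real.rpow_natCast]
  refine (norm_indicator_le_norm_self _ _).trans ?_
  rw [Complex.norm_real, norm_pow, norm_pow, Real.norm_eq_abs, Real.norm_eq_abs, abs_abs]

lemma logPowUnit_isBigO_atTop (k : ℕ) (a : ℝ) :
    logPowUnit k =O[atTop] fun t : ℝ => t ^ (-a) := by
  refine IsBigO.of_bound 1 ?_
  filter_upwards [eventually_gt_atTop 1] with t ht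
  have : logPowUnit k t = 0 := indicator_of_notMem (fun h => absurd h.2 (not_le.2 ht)) _
  rw [this, norm_zero]
  have : 0 < t := one_pos.trans ht
  positivity

lemma hasMellin_logPowUnit (k : ℕ) {s : ℂ} (hs : 0 < s.re) :
    HasMellin (logPowUnit k) s ((-1) ^ k * k.factorial / s ^ (k + 1)) := by
  induction k generalizing s with
  | zero => simpa [logPowUnit] using hasMellin_one_Ioc hs
  | succ k ih =>
    have hloc : LocallyIntegrableOn (logPowUnit k) (Ioi 0) := by
      have := (ih (s := 1) (by simp)).1
      simp only [MellinConvergent, sub_self, cpow_zero, one_smul] at this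
      exact this.locallyIntegrableOn
    have h := mellin_hasDerivAt_of_isBigO_rpow hloc (logPowUnit_isBigO_atTop k (s.re + 1))
      (by linarith) (logPowUnit_isBigO_zero k (half_pos hs)) (by linarith)
    rw [log_smul_logPowUnit] at h
    refine ⟨h.1, ?_⟩
    have hs0 : s ≠ 0 := fun h => by simp [h] at hs
    have hev : mellin (logPowUnit k) =ᶠ[nhds s]
        fun s => (-1) ^ k * k.factorial / s ^ (k + 1) := by
      have hopen : IsOpen {s : ℂ | 0 < s.re} := isOpen_lt continuous_const continuous_re
      filter_upwards [hopen.mem_nhds hs] with z hz using (ih hz).2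
    have hd : HasDerivAt (fun s : ℂ => (-1) ^ k * k.factorial / s ^ (k + 1))
        ((-1) ^ (k + 1) * (k + 1).factorial / s ^ (k + 1 + 1)) s := by
      have := ((hasDerivAt_pow (k + 1) s).inv (pow_ne_zero _ hs0)).const_mul
        ((-1) ^ k * (k.factorial : ℂ))
      refine this.congr_deriv ?_
      rw [Nat.factorial_succ]
      push_cast
      field_simp
      ring
    rw [← h.2.deriv, hev.deriv_eq, hd.deriv]

lemma logPowUnit_eq {k : ℕ} (hk : k ≠ 0) {x : ℝ} (hx : 0 < x) :
    logPowUnit k x = (((min (Real.log x) 0) ^ k : ℝ) : ℂ) := by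
  by_cases h : x ≤ 1
  · rw [logPowUnit, indicator_of_mem (mem_Ioc.2 ⟨hx, h⟩), min_eq_left (Real.log_nonpos hx.le h)]
  · rw [logPowUnit, indicator_of_notMem (fun h' => h h'.2),
      min_eq_right (Real.log_nonneg (not_le.1 h).le), zero_pow hk, ofReal_zero]

lemma half_add_mul_I_ne_zero (t : ℝ) : ((1 / 2 : ℝ) : ℂ) + t * I ≠ 0 := by
  intro h
  have := congrArg re h
  simp at this

lemma norm_inv_pow_half_line_le (k : ℕ) (t : ℝ) :
    ‖((((1 / 2 : ℝ) : ℂ) + t * I) ^ (k + 2))⁻¹‖ ≤ 2 ^ (k + 2) * (1 + t ^ 2)⁻¹ := by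
  set s : ℂ := ((1 / 2 : ℝ) : ℂ) + t * I with hs
  have hsq : ‖s‖ ^ 2 = 1 / 4 + t ^ 2 := by
    rw [← Complex.normSq_eq_norm_sq, hs, Complex.normSq_add_mul_I]
    norm_num
  have hre : 1 / 2 ≤ ‖s‖ := by
    have := abs_re_le_norm s
    have hre : s.re = 1 / 2 := by simp [hs]
    rw [hre] at this
    exact (le_abs_self _).trans this
  have h1 : (1 / 2) ^ k * ((1 + t ^ 2) / 4) ≤ ‖s‖ ^ (k + 2) := by
    rw [pow_add, hsq]
    gcongr
    nlinarith [sq_nonneg t]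
  rw [norm_inv, norm_pow]
  refine (inv_anti₀ (by positivity) h1).trans_eq ?_
  rw [mul_inv, ← inv_pow, inv_div, pow_add]
  norm_num
  ring

lemma integrable_inv_pow_half_line (k : ℕ) :
    Integrable fun t : ℝ => ((((1 / 2 : ℝ) : ℂ) + t * I) ^ (k + 2))⁻¹ := by
  refine (integrable_inv_one_add_sq.const_mul (2 ^ (k + 2))).mono' ?_
    (Eventually.of_forall fun t => norm_inv_pow_half_line_le k t)
  refine Continuous.aestronglyMeasurable ?_
  exact Continuous.inv₀ (by fun_prop) fun t => pow_ne_zero _ (half_add_mul_I_ne_zero t)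

lemma integral_exp_mul_div_pow (k : ℕ) (v : ℝ) :
    ∫ t : ℝ, exp ((((1 / 2 : ℝ) : ℂ) + t * I) * v) * ((((1 / 2 : ℝ) : ℂ) + t * I) ^ (k + 2))⁻¹
      = ((2 * Real.pi * (max v 0) ^ (k + 1) / (k + 1).factorial : ℝ) : ℂ) := by
  have hM : ∀ t : ℝ, mellin (logPowUnit (k + 1)) (((1 / 2 : ℝ) : ℂ) + t * I)
      = ((-1) ^ (k + 1) * (k + 1).factorial) *
        ((((1 / 2 : ℝ) : ℂ) + t * I) ^ (k + 2))⁻¹ := fun t =>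
    (hasMellin_logPowUnit (k + 1) (s := ((1 / 2 : ℝ) : ℂ) + t * I) (by simp)).2
  have hx : 0 < Real.exp (-v) := Real.exp_pos _
  have hcont : ContinuousAt (logPowUnit (k + 1)) (Real.exp (-v)) := by
    have he : logPowUnit (k + 1) =ᶠ[nhds (Real.exp (-v))]
        fun x => (((min (Real.log x) 0) ^ (k + 1) : ℝ) : ℂ) := by
      filter_upwards [lt_mem_nhds hx] with x hx using logPowUnit_eq k.succ_ne_zero hx
    refine ContinuousAt.congr ?_ he.symm
    have := Real.continuousAt_log hx.ne'
    exact Complex.continuous_ofReal.continuousAt.comp ((this.min continuousAt_const).pow _)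
  have hinv := mellinInv_mellin_eq (1 / 2) (logPowUnit (k + 1)) hx
    (hasMellin_logPowUnit (k + 1) (by simp)).1
    (by
      unfold Complex.VerticalIntegrable
      simp only [hM]
      exact (integrable_inv_pow_half_line k).const_mul _)
    hcont
  rw [logPowUnit_eq k.succ_ne_zero hx, mellinInv] at hinv
  simp only [hM, Real.log_exp] at hinv
  have hexp : ∀ t : ℝ, ((Real.exp (-v) : ℝ) : ℂ) ^ (-(((1 / 2 : ℝ) : ℂ) + t * I)) •
      (((-1) ^ (k + 1) * ((k + 1).factorial : ℂ)) * ((((1 / 2 : ℝ) : ℂ) + t * I) ^ (k + 2))⁻¹)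
      = ((-1) ^ (k + 1) * ((k + 1).factorial : ℂ)) *
        (exp ((((1 / 2 : ℝ) : ℂ) + t * I) * v) *
          ((((1 / 2 : ℝ) : ℂ) + t * I) ^ (k + 2))⁻¹) := by
    intro t
    have : ((Real.exp (-v) : ℝ) : ℂ) ^ (-(((1 / 2 : ℝ) : ℂ) + t * I))
        = exp ((((1 / 2 : ℝ) : ℂ) + t * I) * v) := by
      rw [cpow_def_of_ne_zero (by exact_mod_cast hx.ne'), ← ofReal_log hx.le, Real.log_exp]
      congr 1
      push_cast
      ring
    rw [this, smul_eq_mul]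
    ring
  simp only [hexp] at hinv
  rw [integral_const_mul] at hinv
  have hmin : min (-v) 0 = -(max v 0) := by
    rw [← neg_zero, min_neg_neg, neg_zero]
  rw [hmin, neg_pow] at hinv
  have h1 : ((-1 : ℂ)) ^ (k + 1) ≠ 0 := by simp
  have h2 : ((k + 1).factorial : ℂ) ≠ 0 := by exact_mod_cast (k + 1).factorial_ne_zero
  have h3 : (Real.pi : ℂ) ≠ 0 := by exact_mod_cast Real.pi_ne_zero
  generalize (∫ t : ℝ, exp ((((1 / 2 : ℝ) : ℂ) + t * I) * v) *
    ((((1 / 2 : ℝ) : ℂ) + t * I) ^ (k + 2))⁻¹) = J at hinv ⊢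
  rw [real_smul] at hinv
  push_cast at hinv ⊢
  have h4 : ((-1 : ℂ)) ^ (k + 1) * ((k + 1).factorial * J) =
      (-1) ^ (k + 1) * (2 * Real.pi * ((max v 0 : ℝ) : ℂ) ^ (k + 1)) := by
    field_simp at hinv
    rw [Nat.succ_eq_add_one, neg_pow, one_pow] at hinv
    linear_combination hinv
  rw [eq_div_iff h2, mul_comm]
  exact mul_left_cancel₀ h1 h4

/-- The coefficients `Λ(n) log n`. -/
noncomputable def vonMangoldtLog : ℕ → ℂ :=
  LSeries.logMul fun n : ℕ => ((ArithmeticFunction.vonMangoldt n : ℝ) : ℂ)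

lemma abscissaOfAbsConv_vonMangoldt_le :
    LSeries.abscissaOfAbsConv (fun n : ℕ => ((ArithmeticFunction.vonMangoldt n : ℝ) : ℂ))
      ≤ (1 : ℝ) :=
  LSeries.abscissaOfAbsConv_le_of_forall_lt_LSeriesSummable fun y hy =>
    ArithmeticFunction.LSeriesSummable_vonMangoldt (by simpa using hy)

lemma LSeriesSummable_vonMangoldtLog {s : ℂ} (hs : 1 < s.re) :
    LSeriesSummable vonMangoldtLog s :=
  LSeriesSummable_logMul_of_lt_re
    (abscissaOfAbsConv_vonMangoldt_le.trans_lt (by exact_mod_cast hs))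

lemma LSeries_vonMangoldtLog {s : ℂ} (hs : 1 < s.re) :
    LSeries vonMangoldtLog s = deriv (logDeriv riemannZeta₁) s + ((s - 1) ^ 2)⁻¹ := by
  have hopen : IsOpen {s : ℂ | 1 < s.re} := isOpen_lt continuous_const continuous_re
  have hne1 : ∀ z : ℂ, 1 < z.re → z ≠ 1 := by rintro z hz rfl; simp at hz
  have hf : ∀ z : ℂ, 1 < z.re → riemannZeta₁ z ≠ 0 := fun z hz => by
    rw [riemannZeta₁_eq_sub_mul (hne1 z hz)]
    exact mul_ne_zero (sub_ne_zero.2 (hne1 z hz)) (riemannZeta_ne_zero_of_one_lt_re hz)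
  have hL : LSeries (fun n : ℕ => ((ArithmeticFunction.vonMangoldt n : ℝ) : ℂ)) =ᶠ[nhds s]
      fun z => (z - 1)⁻¹ - logDeriv riemannZeta₁ z := by
    filter_upwards [hopen.mem_nhds hs] with z hz
    have hz1 := sub_ne_zero.2 (hne1 z hz)
    rw [ArithmeticFunction.LSeries_vonMangoldt_eq_deriv_riemannZeta_div hz]
    have he : riemannZeta₁ =ᶠ[nhds z] fun z => (z - 1) * riemannZeta z := by
      filter_upwards [hopen.mem_nhds hz] with w hw using riemannZeta₁_eq_sub_mul (hne1 w hw)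
    have hd : logDeriv riemannZeta₁ z = logDeriv (fun z => (z - 1) * riemannZeta z) z := by
      rw [logDeriv_apply, logDeriv_apply, he.deriv_eq, he.eq_of_nhds]
    rw [hd, logDeriv_mul z hz1 (riemannZeta_ne_zero_of_one_lt_re hz) (by fun_prop)
      (differentiableAt_riemannZeta (hne1 z hz)), logDeriv_apply, logDeriv_apply]
    simp only [deriv_sub_const, deriv_id'']
    ring
  have h1 := LSeries_hasDerivAt (s := s)
    (abscissaOfAbsConv_vonMangoldt_le.trans_lt (by exact_mod_cast hs))
  have hld : DifferentiableAt ℂ (logDeriv riemannZeta₁) s :=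
    ((differentiable_riemannZeta₁.differentiableOn.deriv isOpen_univ).differentiableAt
      univ_mem).div (differentiable_riemannZeta₁ s) (hf s hs)
  have hs1 := sub_ne_zero.2 (hne1 s hs)
  have h2 := (((hasDerivAt_id s).sub_const 1).inv hs1).sub hld.hasDerivAt
  have h3 := h1.unique (h2.congr_of_eventuallyEq hL)
  simp only [id] at h3
  have h4 : LSeries vonMangoldtLog s = - -LSeries vonMangoldtLog s := (neg_neg _).symm
  rw [h4]
  change - -LSeries (LSeries.logMul _) s = _
  rw [h3]
  rw [neg_div, one_div]
  ring

lemma vonMangoldtLog_apply (n : ℕ) :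
    vonMangoldtLog n = ((ArithmeticFunction.vonMangoldt n * Real.log n : ℝ) : ℂ) := by
  rw [vonMangoldtLog, LSeries.logMul, ← natCast_log]
  push_cast
  ring

lemma hasSum_vonMangoldtLog_mul_max (v : ℝ) :
    HasSum (fun n : ℕ => 2 * Real.pi *
        (ArithmeticFunction.vonMangoldt n * Real.log n / n * max (v - Real.log n) 0))
      (∫ t : ℝ, LSeries vonMangoldtLog (1 + (((1 / 2 : ℝ) : ℂ) + t * I)) *
        (exp ((((1 / 2 : ℝ) : ℂ) + t * I) * v) * ((((1 / 2 : ℝ) : ℂ) + t * I) ^ 2)⁻¹)).re := by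
  set σ : ℝ → ℂ := fun t => ((1 / 2 : ℝ) : ℂ) + t * I with hσ
  have hre : ∀ t, (1 + σ t).re = 3 / 2 := by intro t; simp [hσ]; norm_num
  set F : ℕ → ℝ → ℂ := fun n t => LSeries.term vonMangoldtLog (1 + σ t) n *
    (exp (σ t * v) * ((σ t) ^ 2)⁻¹) with hF
  have hbase : Integrable fun t : ℝ => ((σ t) ^ 2)⁻¹ := integrable_inv_pow_half_line 0
  have hterm : ∀ n t, F n t = vonMangoldtLog n / n *
      (exp (σ t * ((v - Real.log n : ℝ) : ℂ)) * ((σ t) ^ 2)⁻¹) := by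
    intro n t
    rcases Nat.eq_zero_or_pos n with rfl | hn
    · simp [hF]
    have hn0 : (n : ℂ) ≠ 0 := by exact_mod_cast hn.ne'
    simp only [hF]
    rw [LSeries.term_of_ne_zero hn.ne', cpow_add _ _ hn0, cpow_one, cpow_def_of_ne_zero hn0,
      ← natCast_log]
    have : exp (σ t * ((v - Real.log n : ℝ) : ℂ))
        = exp (σ t * v) / exp (Real.log n * σ t) := by
      rw [← exp_sub]
      congr 1
      push_cast
      ring
    rw [this]
    have := exp_ne_zero (Real.log n * σ t)
    field_simp
  have hnorm : ∀ n t, ‖F n t‖ = ‖LSeries.term vonMangoldtLog (3 / 2 : ℝ) n‖ *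
      (Real.exp (v / 2) * ‖((σ t) ^ 2)⁻¹‖) := by
    intro n t
    have h1 : ‖LSeries.term vonMangoldtLog (1 + σ t) n‖
        = ‖LSeries.term vonMangoldtLog (3 / 2 : ℝ) n‖ := by
      rw [LSeries.norm_term_eq, LSeries.norm_term_eq, hre, ofReal_re]
    have h2 : (σ t * v).re = v / 2 := by
      simp [hσ]; ring
    simp only [hF]
    rw [norm_mul, norm_mul, h1, norm_exp, h2]
  have hFi : ∀ n, Integrable (F n) := by
    intro n
    have hc : Continuous (F n) := by
      have : F n = fun t => vonMangoldtLog n / n *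
          (exp (σ t * ((v - Real.log n : ℝ) : ℂ)) * ((σ t) ^ 2)⁻¹) := funext (hterm n)
      rw [this]
      have : Continuous fun t => ((σ t) ^ 2)⁻¹ :=
        Continuous.inv₀ (by fun_prop) fun t => pow_ne_zero _ (half_add_mul_I_ne_zero t)
      fun_prop
    refine (((hbase.norm.const_mul (Real.exp (v / 2))).const_mul
      ‖LSeries.term vonMangoldtLog (3 / 2 : ℝ) n‖)).mono' hc.aestronglyMeasurable
      (Eventually.of_forall fun t => (hnorm n t).le)
  have hsum : Summable fun n => ∫ t, ‖F n t‖ := by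
    simp only [hnorm]
    simp only [integral_const_mul]
    refine Summable.mul_right _ ?_
    exact (LSeriesSummable_vonMangoldtLog (s := (3 / 2 : ℝ)) (by norm_num)).norm
  have key := hasSum_re (hasSum_integral_of_summable_integral_norm hFi hsum)
  have hR : (fun t => ∑' n, F n t) = fun t => LSeries vonMangoldtLog (1 + σ t) *
      (exp (σ t * v) * ((σ t) ^ 2)⁻¹) := by
    ext t
    rw [LSeries, ← tsum_mul_right]
  rw [hR] at key
  refine key.congr_fun ?_
  intro n
  have h5 := integral_exp_mul_div_pow 0 (v - Real.log n)
  simp only [hterm]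
  rw [integral_const_mul]
  simp only [zero_add] at h5
  simp only [hσ]
  rw [h5, vonMangoldtLog_apply]
  have : (((ArithmeticFunction.vonMangoldt n * Real.log n : ℝ) : ℂ) / n) *
      ((2 * Real.pi * (max (v - Real.log n) 0) ^ 1 / (Nat.factorial 1) : ℝ) : ℂ)
      = ((ArithmeticFunction.vonMangoldt n * Real.log n / n *
        (2 * Real.pi * (max (v - Real.log n) 0))  : ℝ) : ℂ) := by
    push_cast
    simp
  rw [this, ofReal_re]
  ring

lemma integrable_of_norm_le_abs_rpow {F : ℝ → ℂ} (hF : Continuous F) {C r : ℝ} (hr : 1 < r)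
    (hb : ∀ t : ℝ, 1 ≤ |t| → ‖F t‖ ≤ C * |t| ^ (-r)) : Integrable F := by
  have hC : 0 ≤ C := by
    have := (norm_nonneg _).trans (hb 1 (by simp))
    simpa using this
  have hg : Integrable fun t : ℝ => (1 + ‖t‖ ^ 2) ^ (-r / 2) :=
    integrable_rpow_neg_one_add_norm_sq (by simpa using hr)
  have key : ∀ t : ℝ, 1 ≤ |t| → ‖F t‖ ≤ (C * 2 ^ (r / 2)) * ‖(1 + ‖t‖ ^ 2) ^ (-r / 2)‖ := by
    intro t ht
    refine (hb t ht).trans ?_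
    rw [mul_assoc]
    gcongr
    have h0 : 0 < |t| := one_pos.trans_le ht
    have h1 : (2 * |t| ^ 2) ^ (-r / 2) ≤ (1 + ‖t‖ ^ 2) ^ (-r / 2) := by
      refine Real.rpow_le_rpow_of_nonpos (by positivity) ?_ (by linarith)
      rw [Real.norm_eq_abs]
      nlinarith
    rw [Real.norm_of_nonneg (by positivity)]
    calc |t| ^ (-r) = 2 ^ (r / 2) * (2 * |t| ^ 2) ^ (-r / 2) := by
          rw [Real.mul_rpow (by norm_num) (by positivity), ← mul_assoc,
            ← Real.rpow_add (by norm_num), ← Real.rpow_natCast, ← Real.rpow_mul h0.le]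
          ring_nf
          simp
      _ ≤ _ := by gcongr
  refine hF.locallyIntegrable.integrable_of_isBigO_atBot_atTop
    (IsBigO.of_bound (C * 2 ^ (r / 2)) ?_) (hg.integrableAtFilter _)
    (IsBigO.of_bound (C * 2 ^ (r / 2)) ?_) (hg.integrableAtFilter _)
  · filter_upwards [eventually_le_atBot (-1)] with t ht
    exact key t (by rw [abs_of_nonpos (by linarith)]; linarith)
  · filter_upwards [eventually_ge_atTop 1] with t ht
    exact key t (by rw [abs_of_nonneg (by linarith)]; linarith)

/-- Shifting a vertical line of integration across a strip of holomorphy and decay. -/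
lemma integral_vertical_line_eq {H : ℂ → ℂ} {a b C r : ℝ} (hab : a ≤ b) (hr : 1 < r)
    (hH : DifferentiableOn ℂ H {s | s.re ∈ Icc a b})
    (hb : ∀ s : ℂ, s.re ∈ Icc a b → 1 ≤ |s.im| → ‖H s‖ ≤ C * |s.im| ^ (-r)) :
    Integrable (fun t : ℝ => H (a + t * I)) ∧ Integrable (fun t : ℝ => H (b + t * I)) ∧
    ∫ t : ℝ, H (b + t * I) = ∫ t : ℝ, H (a + t * I) := by
  have hint : ∀ c ∈ Icc a b, Integrable fun t : ℝ => H (c + t * I) := by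
    intro c hc
    refine integrable_of_norm_le_abs_rpow (C := C) ?_ hr fun t ht => ?_
    · exact hH.continuousOn.comp_continuous (by fun_prop) fun t => by simpa using hc
    · have := hb (c + t * I) (by simpa using hc) (by simpa using ht)
      simpa using this
  have ha := hint a (left_mem_Icc.2 hab)
  have hb' := hint b (right_mem_Icc.2 hab)
  refine ⟨ha, hb', ?_⟩
  have hrect : ∀ T : ℝ, 1 ≤ T →
      ((∫ x in a..b, H (x + ((-T : ℝ) : ℂ) * I)) - ∫ x in a..b, H (x + (T : ℂ) * I))
      + I • (∫ y in (-T)..T, H (b + y * I)) - I • ∫ y in (-T)..T, H (a + y * I) = 0 := by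
    intro T hT
    have := Complex.integral_boundary_rect_eq_zero_of_differentiableOn H ⟨a, -T⟩ ⟨b, T⟩
      (hH.mono fun s hs => by
        have := hs.1
        rw [uIcc_of_le hab] at this
        exact this)
    exact this
  have hhor : ∀ ε : ℝ, |ε| = 1 →
      Tendsto (fun T : ℝ => ∫ x in a..b, H (x + ((ε * T : ℝ) : ℂ) * I)) atTop (nhds 0) := by
    intro ε hε
    have hlim : Tendsto (fun T : ℝ => C * T ^ (-r) * |b - a|) atTop (nhds 0) := by
      have := ((tendsto_rpow_neg_atTop (show 0 < r by linarith)).const_mul C).mul_const |b - a|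
      simpa using this
    refine squeeze_zero_norm' ?_ hlim
    filter_upwards [eventually_ge_atTop 1] with T hT
    refine intervalIntegral.norm_integral_le_of_norm_le_const fun x hx => ?_
    rw [uIoc_of_le hab] at hx
    have hεT : |ε * T| = T := by rw [abs_mul, hε, one_mul, abs_of_nonneg (by linarith)]
    have := hb (x + ((ε * T : ℝ) : ℂ) * I) (by simpa using ⟨hx.1.le, hx.2⟩)
      (by
        have : ((x : ℂ) + ((ε * T : ℝ) : ℂ) * I).im = ε * T := by simp
        rw [this, hεT]; exact hT)
    have him : ((x : ℂ) + ((ε * T : ℝ) : ℂ) * I).im = ε * T := by simp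
    rwa [him, hεT] at this
  have h1 := hhor (-1) (by simp)
  have h2 := hhor 1 (by simp)
  simp only [neg_one_mul, one_mul] at h1 h2
  have h3 := intervalIntegral_tendsto_integral hb' tendsto_neg_atTop_atBot tendsto_id
  have h4 := intervalIntegral_tendsto_integral ha tendsto_neg_atTop_atBot tendsto_id
  have h5 := ((h1.sub h2).add (h3.const_smul I)).sub (h4.const_smul I)
  have h6 := tendsto_nhds_unique (h5.congr' ?_) (tendsto_const_nhds (x := (0 : ℂ)))
  · rw [sub_zero, zero_add, ← smul_sub, smul_eq_mul, mul_eq_zero, sub_eq_zero] at h6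
    exact h6.resolve_left I_ne_zero
  · filter_upwards [eventually_ge_atTop 1] with T hT using hrect T hT

lemma integral_ite_abs_le (A B : ℝ) :
    Integrable (fun t : ℝ => if |t| ≤ 1 then A else B * |t| ^ (-(5 / 4) : ℝ)) ∧
    ∫ t : ℝ, (if |t| ≤ 1 then A else B * |t| ^ (-(5 / 4) : ℝ)) = 2 * A + 8 * B := by
  set φ : ℝ → ℝ := fun t => if t ≤ 1 then A else B * t ^ (-(5 / 4) : ℝ) with hφ
  have hi : IntegrableOn (fun t : ℝ => B * t ^ (-(5 / 4) : ℝ)) (Ioi 1) :=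
    (integrableOn_Ioi_rpow_of_lt (by norm_num) one_pos).const_mul B
  have h1 : IntegrableOn φ (Ioi 1) :=
    hi.congr_fun (fun t ht => by simp [hφ, not_le.2 (mem_Ioi.1 ht)]) measurableSet_Ioi
  have h2 : IntegrableOn φ (Ioc 0 1) := by
    have : IntegrableOn (fun _ : ℝ => A) (Ioc (0 : ℝ) 1) := by simp
    exact this.congr_fun (fun t ht => by simp [hφ, ht.2]) measurableSet_Ioc
  have h3 : IntegrableOn φ (Ioi 0) := by
    rw [← Ioc_union_Ioi_eq_Ioi zero_le_one]
    exact h2.union h1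
  have hv : ∫ t in Ioi (0 : ℝ), φ t = A + 4 * B := by
    rw [← Ioc_union_Ioi_eq_Ioi zero_le_one, setIntegral_union
      (Ioc_disjoint_Ioi le_rfl) measurableSet_Ioi h2 h1,
      setIntegral_congr_fun (g := fun _ => A) measurableSet_Ioc (fun t ht => by simp [hφ, ht.2]),
      setIntegral_congr_fun (g := fun t : ℝ => B * t ^ (-(5 / 4) : ℝ)) measurableSet_Ioi
        (fun t ht => by simp [hφ, not_le.2 (mem_Ioi.1 ht)]),
      integral_const_mul, integral_Ioi_rpow_of_lt (by norm_num) one_pos]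
    simp
    ring
  have hval : ∫ t : ℝ, φ |t| = 2 * A + 8 * B := by
    rw [integral_comp_abs, hv]; ring
  refine ⟨?_, hval⟩
  have hIoi : IntegrableOn (fun t => φ |t|) (Ioi 0) :=
    h3.congr_fun (fun t ht => by simp [abs_of_pos (mem_Ioi.1 ht)]) measurableSet_Ioi
  have hIic : IntegrableOn (fun t => φ |t|) (Iic 0) := by
    have := (integrableOn_Ici_iff_integrableOn_Ioi (by simp)).2 hIoi
    have := (Measure.measurePreserving_neg (volume : Measure ℝ)).integrableOn_comp_preimage
      (MeasurableEquiv.neg ℝ).measurableEmbedding |>.2 this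
    simpa [Function.comp_def] using this
  have := hIic.union hIoi
  rw [Iic_union_Ioi, integrableOn_univ] at this
  exact this

lemma integral_log_sub_one_div_sq :
    IntegrableOn (fun t : ℝ => (Real.log t - 1) / t ^ 2) (Ioi (Real.exp 1)) ∧
    ∫ t in Ioi (Real.exp 1), (Real.log t - 1) / t ^ 2 = Real.exp (-1) := by
  have hd : ∀ t ∈ Ici (Real.exp 1),
      HasDerivAt (fun t => -(Real.log t / t)) ((Real.log t - 1) / t ^ 2) t := by
    intro t ht
    have ht0 : t ≠ 0 := ((Real.exp_pos 1).trans_le ht).ne'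
    refine (((Real.hasDerivAt_log ht0).div (hasDerivAt_id t) ht0).neg).congr_deriv ?_
    simp only [id]
    field_simp
    ring
  have hpos : ∀ t ∈ Ioi (Real.exp 1), 0 ≤ (Real.log t - 1) / t ^ 2 := by
    intro t ht
    have := (Real.le_log_iff_exp_le ((Real.exp_pos 1).trans ht)).2 (le_of_lt ht)
    exact div_nonneg (by linarith) (by positivity)
  have hlim : Tendsto (fun t => -(Real.log t / t)) atTop (nhds 0) := by
    have := (Real.isLittleO_log_id_atTop.tendsto_div_nhds_zero).neg
    simpa using this
  refine ⟨integrableOn_Ioi_deriv_of_nonneg' hd hpos hlim, ?_⟩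
  rw [integral_Ioi_of_hasDerivAt_of_nonneg' hd hpos hlim]
  rw [Real.log_exp, Real.exp_neg]
  ring

lemma deriv_deriv_riemannZeta₁_one :
    deriv (deriv riemannZeta₁) 1 =
      2 * (mellin (fun t => Real.log t • fractTail t) (-1) - mellin fractTail (-1)) := by
  have hM : ∀ s : ℂ, s.re < 0 → DifferentiableAt ℂ (mellin fractTail) s := fun s hs =>
    (hasDerivAt_mellin_fractTail hs).2.differentiableAt
  have hMd : DifferentiableAt ℂ (deriv (mellin fractTail)) (-1) := by
    have hopen : IsOpen {s : ℂ | s.re < 0} := isOpen_lt continuous_re continuous_const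
    have : DifferentiableOn ℂ (mellin fractTail) {s : ℂ | s.re < 0} :=
      fun s hs => (hM s hs).differentiableWithinAt
    exact (this.deriv hopen).differentiableAt (hopen.mem_nhds (by simp))
  have hd : deriv riemannZeta₁ =ᶠ[nhds 1] fun s => 1 - (2 * s - 1) * mellin fractTail (-s)
      + s * (s - 1) * deriv (mellin fractTail) (-s) := by
    have hopen : IsOpen {s : ℂ | 0 < s.re} := isOpen_lt continuous_const continuous_re
    filter_upwards [hopen.mem_nhds (show (1 : ℂ) ∈ _ by simp)] with s hs
    have he : riemannZeta₁ =ᶠ[nhds s] fun s => s - s * (s - 1) * mellin fractTail (-s) := by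
      filter_upwards [hopen.mem_nhds hs] with z hz using riemannZeta₁_eq hz
    rw [he.deriv_eq]
    have h1 : HasDerivAt (fun s => mellin fractTail (-s)) (-deriv (mellin fractTail) (-s)) s := by
      have := (hM (-s) (by simpa using hs)).hasDerivAt.comp s (hasDerivAt_neg s)
      rwa [mul_neg_one] at this
    have h2 := (hasDerivAt_id s).sub
      (((hasDerivAt_id s).mul ((hasDerivAt_id s).sub_const 1)).mul h1)
    refine HasDerivAt.deriv (h2.congr_deriv ?_)
    simp only [id, Pi.mul_apply]
    ring
  rw [hd.deriv_eq]
  have h1 : HasDerivAt (fun s => mellin fractTail (-s)) (-deriv (mellin fractTail) (-1)) 1 := by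
    have := (hM (-1) (by simp)).hasDerivAt.comp (1 : ℂ) (hasDerivAt_neg (1 : ℂ))
    rwa [mul_neg_one] at this
  have h3 : HasDerivAt (fun s => deriv (mellin fractTail) (-s))
      (-deriv (deriv (mellin fractTail)) (-1)) 1 := by
    have := hMd.hasDerivAt.comp (1 : ℂ) (hasDerivAt_neg (1 : ℂ))
    rwa [mul_neg_one] at this
  have h2 := ((((hasDerivAt_id (1 : ℂ)).const_mul 2).sub_const 1).mul h1).const_sub 1 |>.add
      (((hasDerivAt_id (1 : ℂ)).mul ((hasDerivAt_id (1 : ℂ)).sub_const 1)).mul h3)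
  rw [← (hasDerivAt_mellin_fractTail (s := -1) (by simp)).2.deriv]
  refine HasDerivAt.deriv (h2.congr_deriv ?_)
  simp only [id, Pi.mul_apply]
  ring

lemma re_deriv_deriv_riemannZeta₁_one_le :
    (deriv (deriv riemannZeta₁) 1).re ≤ 2 * Real.exp (-1) := by
  set F : ℝ → ℝ := fun t => Int.fract t * ((Real.log t - 1) / t ^ 2) with hF
  have hc := hasDerivAt_mellin_fractTail (s := -1) (by simp)
  have hc0 := mellinConvergent_fractTail (s := -1) (by simp)
  have hpt : ∀ t ∈ Ioi (0 : ℝ), (t : ℂ) ^ (-1 - 1 : ℂ) • (Real.log t • fractTail t)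
      - (t : ℂ) ^ (-1 - 1 : ℂ) • fractTail t = (((Ioi (1 : ℝ)).indicator F t : ℝ) : ℂ) := by
    intro t ht
    have e : (t : ℂ) ^ (-1 - 1 : ℂ) = ((t ^ 2)⁻¹ : ℝ) := by
      have : (-1 - 1 : ℂ) = -((2 : ℕ) : ℂ) := by norm_num
      rw [this, cpow_neg, cpow_natCast]
      push_cast
      rfl
    by_cases h : t ∈ Ioi (1 : ℝ)
    · simp only [fractTail, h, indicator_of_mem, hF, e]
      simp only [smul_eq_mul, real_smul]
      push_cast
      ring
    · simp [fractTail, h]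
  have hcomb : mellin (fun t => Real.log t • fractTail t) (-1) - mellin fractTail (-1)
      = ((∫ t in Ioi (1 : ℝ), F t : ℝ) : ℂ) := by
    rw [mellin, mellin, ← integral_sub hc.1 hc0, setIntegral_congr_fun measurableSet_Ioi hpt,
      integral_complex_ofReal, setIntegral_indicator measurableSet_Ioi,
      inter_eq_right.2 (Ioi_subset_Ioi zero_le_one)]
  have hFi : IntegrableOn F (Ioi 1) := by
    have h1 : IntegrableOn (fun t => (((Ioi (1 : ℝ)).indicator F t : ℝ) : ℂ)) (Ioi 0) :=
      (hc.1.sub hc0).congr_fun hpt measurableSet_Ioi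
    have h2 : IntegrableOn (fun t => (Ioi (1 : ℝ)).indicator F t) (Ioi 0) := by
      have := Integrable.re h1
      simpa [IntegrableOn] using this
    refine (h2.mono_set (Ioi_subset_Ioi zero_le_one)).congr_fun (fun t ht => ?_) measurableSet_Ioi
    simp [mem_Ioi.1 ht]
  obtain ⟨hi, hv⟩ := integral_log_sub_one_div_sq
  have hle : ∫ t in Ioi (1 : ℝ), F t ≤ Real.exp (-1) := by
    have he1 : (1 : ℝ) ≤ Real.exp 1 := by simp
    rw [← hv]
    have e1 : ∫ t in Ioi (Real.exp 1), (Real.log t - 1) / t ^ 2 = ∫ t in Ioi (1 : ℝ),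
        (Ioi (Real.exp 1)).indicator (fun t => (Real.log t - 1) / t ^ 2) t := by
      rw [setIntegral_indicator measurableSet_Ioi, inter_eq_right.2 (Ioi_subset_Ioi he1)]
    rw [e1]
    refine setIntegral_mono_on hFi ?_ measurableSet_Ioi fun t ht => ?_
    · exact ((integrable_indicator_iff measurableSet_Ioi).2 hi).integrableOn
    · have ht0 : 0 < t := one_pos.trans ht
      by_cases h : t ∈ Ioi (Real.exp 1)
      · rw [indicator_of_mem h]
        have := (Real.le_log_iff_exp_le ht0).2 (le_of_lt h)
        have h2 : 0 ≤ (Real.log t - 1) / t ^ 2 := div_nonneg (by linarith) (by positivity)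
        exact mul_le_of_le_one_left h2 (Int.fract_lt_one t).le
      · rw [indicator_of_notMem h]
        have := (Real.log_le_iff_le_exp ht0).2 (not_lt.1 h)
        exact mul_nonpos_of_nonneg_of_nonpos (Int.fract_nonneg t)
          (div_nonpos_of_nonpos_of_nonneg (by linarith) (by positivity))
  rw [deriv_deriv_riemannZeta₁_one, hcomb, ← ofReal_ofNat, ← ofReal_mul, ofReal_re]
  linarith

lemma re_deriv_logDeriv_riemannZeta₁_one_le :
    (deriv (logDeriv riemannZeta₁) 1).re ≤ 0.486 := by
  have hd : HasDerivAt (logDeriv riemannZeta₁)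
      (deriv (deriv riemannZeta₁) 1 - (Real.eulerMascheroniConstant : ℂ) ^ 2) 1 := by
    have h1 : DifferentiableAt ℂ (deriv riemannZeta₁) 1 :=
      (differentiable_riemannZeta₁.differentiableOn.deriv isOpen_univ).differentiableAt univ_mem
    have := h1.hasDerivAt.div (differentiable_riemannZeta₁ 1).hasDerivAt (by simp)
    refine this.congr_deriv ?_
    rw [riemannZeta₁_one, deriv_riemannZeta₁_one]
    ring
  rw [hd.deriv, sub_re, ← ofReal_pow, ofReal_re]
  have h1 := re_deriv_deriv_riemannZeta₁_one_le
  have h2 := Real.one_half_lt_eulerMascheroniConstant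
  have h3 : Real.exp (-1) ≤ 0.368 := by
    rw [Real.exp_neg]
    have := Real.exp_one_gt_d9
    rw [inv_le_comm₀ (Real.exp_pos 1) (by norm_num)]
    linarith
  nlinarith

lemma norm_exp_sub_one_le_of_re_nonpos {z : ℂ} (hz : z.re ≤ 0) : ‖exp z - 1‖ ≤ ‖z‖ := by
  have := (convex_halfSpace_re_le 0).norm_image_sub_le_of_norm_deriv_le (𝕜 := ℂ) (f := exp)
    (C := 1) (x := 0) (y := z) (fun x _ => differentiable_exp x) (fun x hx => by
      rw [Complex.deriv_exp, norm_exp]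
      exact Real.exp_le_one_iff.2 hx) (by simp) hz
  simpa using this

/-- The regularised integrand of the explicit formula. -/
noncomputable def shiftIntegrand (u δ : ℝ) (s : ℂ) : ℂ :=
  dslope (fun s => deriv (logDeriv riemannZeta₁) (1 + s)) 0 s *
    dslope (fun s => exp (s * ((u + δ : ℝ) : ℂ)) - exp (s * u)) 0 s

lemma shiftIntegrand_of_ne (u δ : ℝ) {s : ℂ} (hs : s ≠ 0) :
    shiftIntegrand u δ s =
      (deriv (logDeriv riemannZeta₁) (1 + s) - deriv (logDeriv riemannZeta₁) 1) *
      ((exp (s * ((u + δ : ℝ) : ℂ)) - exp (s * u)) * (s ^ 2)⁻¹) := by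
  rw [shiftIntegrand, dslope_of_ne _ hs, dslope_of_ne _ hs, slope_def_field, slope_def_field]
  simp only [zero_mul, exp_zero, sub_self, sub_zero, add_zero]
  field_simp

lemma differentiableOn_shiftIntegrand (hRH : RiemannHypothesis) (u δ : ℝ) :
    DifferentiableOn ℂ (shiftIntegrand u δ) {s | s.re ∈ Icc (-(2 / 5)) (1 / 2)} := by
  set V : Set ℂ := {s | 1 / 2 < s.re}
  set U : Set ℂ := {s | -(1 / 2) < s.re}
  have hV : IsOpen V := isOpen_lt continuous_const continuous_re
  have hU : IsOpen U := isOpen_lt continuous_const continuous_re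
  have hld : DifferentiableOn ℂ (logDeriv riemannZeta₁) V := fun s hs =>
    (((differentiable_riemannZeta₁.differentiableOn.deriv isOpen_univ).differentiableAt
      univ_mem).div (differentiable_riemannZeta₁ s)
      (riemannZeta₁_ne_zero hRH hs)).differentiableWithinAt
  have h1 : DifferentiableOn ℂ (fun s => deriv (logDeriv riemannZeta₁) (1 + s)) U := by
    refine (hld.deriv hV).comp (by fun_prop) fun s hs => ?_
    have : -(1 / 2) < s.re := hs
    change 1 / 2 < (1 + s).re
    rw [add_re, one_re]
    linarith
  have h0 : U ∈ nhds (0 : ℂ) := hU.mem_nhds (by simp [U])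
  have h2 : DifferentiableOn ℂ (fun s => exp (s * ((u + δ : ℝ) : ℂ)) - exp (s * u)) U := by
    fun_prop
  refine (((differentiableOn_dslope h0).2 h1).mul ((differentiableOn_dslope h0).2 h2)).mono ?_
  intro s hs
  have := hs.1
  change -(1 / 2) < s.re
  linarith

lemma norm_deriv_logDeriv_sub_le (hRH : RiemannHypothesis) {s : ℂ}
    (hs : s.re ∈ Icc (-(2 / 5)) (1 / 2)) :
    ‖deriv (logDeriv riemannZeta₁) (1 + s) - deriv (logDeriv riemannZeta₁) 1‖ ≤
      16531.2 * (max 1 |s.im|) ^ (1 / 4 : ℝ) := by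
  have h1 := norm_deriv_logDeriv_riemannZeta₁_le hRH (s := 1 + s) (r := 9 / 10) (by norm_num) (by
    rw [add_re, one_re, abs_le]
    constructor <;> linarith [hs.1, hs.2])
  have h2 := norm_deriv_logDeriv_riemannZeta₁_le hRH (s := 1) (r := 1 / 2) (by norm_num) (by
    rw [one_re, abs_le]
    constructor <;> norm_num)
  have him : (1 + s).im = s.im := by simp
  rw [him] at h1
  simp only [one_im, abs_zero, max_eq_left zero_le_one, Real.one_rpow] at h2
  have h3 : 1 ≤ (max 1 |s.im|) ^ (1 / 4 : ℝ) :=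
    Real.one_le_rpow (le_max_left _ _) (by norm_num)
  refine (norm_sub_le _ _).trans ((add_le_add h1 h2).trans ?_)
  norm_num
  norm_num at h3
  linarith

lemma norm_shiftIntegrand_le_of_one_le (hRH : RiemannHypothesis) {u δ : ℝ} (hu : 0 ≤ u)
    (hδ : 0 ≤ δ) {s : ℂ} (hs : s.re ∈ Icc (-(2 / 5)) (1 / 2)) (him : 1 ≤ |s.im|) :
    ‖shiftIntegrand u δ s‖ ≤
      16531.2 * (2 * Real.exp ((u + δ) / 2)) * |s.im| ^ (-(7 / 4) : ℝ) := by
  have hs0 : s ≠ 0 := by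
    rintro rfl
    norm_num at him
  have h0 : 0 < |s.im| := one_pos.trans_le him
  rw [shiftIntegrand_of_ne u δ hs0, norm_mul, norm_mul, norm_inv, norm_pow]
  have h1 := norm_deriv_logDeriv_sub_le hRH hs
  rw [max_eq_right him] at h1
  have hre : ∀ v : ℝ, 0 ≤ v → v ≤ u + δ → ‖exp (s * v)‖ ≤ Real.exp ((u + δ) / 2) := by
    intro v hv hv'
    rw [norm_exp, re_mul_ofReal]
    refine Real.exp_le_exp.2 ?_
    nlinarith [hs.2]
  have h2 : ‖exp (s * ((u + δ : ℝ) : ℂ)) - exp (s * u)‖ ≤ 2 * Real.exp ((u + δ) / 2) := by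
    refine (norm_sub_le _ _).trans ?_
    linarith [hre (u + δ) (by linarith) le_rfl, hre u hu (by linarith)]
  have h3 : (‖s‖ ^ 2)⁻¹ ≤ (|s.im| ^ 2)⁻¹ := by
    gcongr
    exact abs_im_le_norm s
  have h4 : |s.im| ^ (1 / 4 : ℝ) * (|s.im| ^ 2)⁻¹ = |s.im| ^ (-(7 / 4) : ℝ) := by
    rw [← Real.rpow_natCast, ← Real.rpow_neg h0.le, ← Real.rpow_add h0]
    norm_num
  calc _ ≤ 16531.2 * |s.im| ^ (1 / 4 : ℝ) * (2 * Real.exp ((u + δ) / 2) * (|s.im| ^ 2)⁻¹) := by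
        gcongr
    _ = 16531.2 * (2 * Real.exp ((u + δ) / 2)) * (|s.im| ^ (1 / 4 : ℝ) * (|s.im| ^ 2)⁻¹) := by
        ring
    _ = _ := by rw [h4]

lemma norm_shiftIntegrand_left_line_le (hRH : RiemannHypothesis) {u δ q : ℝ}
    (hδ : 0 ≤ δ) (hq : 0 ≤ q) (hδq : 2 ≤ δ * q ^ 2) (t : ℝ) :
    ‖shiftIntegrand u δ (((-(2 / 5) : ℝ) : ℂ) + t * I)‖ ≤
      if |t| ≤ 1 then 16531.2 * Real.exp (-(2 / 5) * u) * δ * (5 / 2)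
      else 16531.2 * Real.exp (-(2 / 5) * u) * δ * q * |t| ^ (-(5 / 4) : ℝ) := by
  set s : ℂ := ((-(2 / 5) : ℝ) : ℂ) + t * I with hs
  have hre : s.re = -(2 / 5) := by simp [hs]
  have him : s.im = t := by simp [hs]
  have hs25 : 2 / 5 ≤ ‖s‖ := by
    have := abs_re_le_norm s
    rw [hre] at this
    refine le_trans ?_ this
    norm_num
  have hsp : 0 < ‖s‖ := by linarith
  have hs0 : s ≠ 0 := norm_pos_iff.1 hsp
  have hmem : s.re ∈ Icc (-(2 / 5)) (1 / 2) := by rw [hre]; constructor <;> norm_num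
  have h1 := norm_deriv_logDeriv_sub_le hRH hmem
  rw [him] at h1
  have hfac : exp (s * ((u + δ : ℝ) : ℂ)) - exp (s * u) = exp (s * u) * (exp (s * δ) - 1) := by
    rw [mul_sub, ← exp_add, mul_one]
    congr 2
    push_cast
    ring
  have hexp : ‖exp (s * u)‖ = Real.exp (-(2 / 5) * u) := by
    rw [norm_exp, re_mul_ofReal, hre]
  have hsre : (s * δ).re ≤ 0 := by
    rw [re_mul_ofReal, hre]
    linarith
  have hN1 : ‖exp (s * δ) - 1‖ ≤ δ * ‖s‖ := by
    have := norm_exp_sub_one_le_of_re_nonpos hsre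
    rw [norm_mul, norm_real, Real.norm_of_nonneg hδ] at this; linarith
  have hN2 : ‖exp (s * δ) - 1‖ ≤ 2 := by
    refine (norm_sub_le _ _).trans ?_
    rw [norm_exp, norm_one]
    linarith [Real.exp_le_one_iff.2 hsre]
  rw [shiftIntegrand_of_ne u δ hs0, norm_mul, norm_mul, norm_inv, norm_pow, hfac, norm_mul, hexp]
  set E := Real.exp (-(2 / 5) * u)
  split_ifs with ht
  · rw [max_eq_left ht, Real.one_rpow, mul_one] at h1
    calc _ ≤ 16531.2 * (E * (δ * ‖s‖) * (‖s‖ ^ 2)⁻¹) := by gcongr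
      _ = 16531.2 * E * δ * ‖s‖⁻¹ := by field_simp
      _ ≤ _ := by
        gcongr
        rw [inv_le_comm₀ hsp (by norm_num)]
        linarith
  · have ht1 : 1 ≤ |t| := (not_le.1 ht).le
    have ht0 : 0 < |t| := one_pos.trans_le ht1
    rw [max_eq_right ht1] at h1
    have hts : |t| ≤ ‖s‖ := by
      rw [← him]; exact abs_im_le_norm s
    have hN3 : ‖exp (s * δ) - 1‖ ≤ δ * q * ‖s‖ ^ (1 / 2 : ℝ) := by
      refine le_of_sq_le_sq ?_ (by positivity)
      have e : (‖s‖ ^ (1 / 2 : ℝ)) ^ 2 = ‖s‖ := by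
        rw [← Real.rpow_natCast, ← Real.rpow_mul hsp.le]
        norm_num
      rw [mul_pow, e]
      calc ‖exp (s * δ) - 1‖ ^ 2 ≤ 2 * (δ * ‖s‖) := by
            rw [sq]
            gcongr
        _ ≤ δ * q ^ 2 * (δ * ‖s‖) := by gcongr
        _ = _ := by ring
    have e2 : ‖s‖ ^ (1 / 2 : ℝ) * (‖s‖ ^ 2)⁻¹ = ‖s‖ ^ (-(3 / 2) : ℝ) := by
      rw [← Real.rpow_natCast, ← Real.rpow_neg hsp.le, ← Real.rpow_add hsp]
      norm_num
    have e3 : ‖s‖ ^ (-(3 / 2) : ℝ) ≤ |t| ^ (-(3 / 2) : ℝ) :=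
      Real.rpow_le_rpow_of_nonpos ht0 hts (by norm_num)
    have e4 : |t| ^ (1 / 4 : ℝ) * |t| ^ (-(3 / 2) : ℝ) = |t| ^ (-(5 / 4) : ℝ) := by
      rw [← Real.rpow_add ht0]
      norm_num
    calc _ ≤ 16531.2 * |t| ^ (1 / 4 : ℝ) *
          (E * (δ * q * ‖s‖ ^ (1 / 2 : ℝ)) * (‖s‖ ^ 2)⁻¹) := by gcongr
      _ = 16531.2 * E * δ * q * (|t| ^ (1 / 4 : ℝ) *
          (‖s‖ ^ (1 / 2 : ℝ) * (‖s‖ ^ 2)⁻¹)) := by ring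
      _ ≤ 16531.2 * E * δ * q * (|t| ^ (1 / 4 : ℝ) * |t| ^ (-(3 / 2) : ℝ)) := by
        rw [e2]
        gcongr
      _ = _ := by rw [e4]

lemma norm_integral_shiftIntegrand_le (hRH : RiemannHypothesis) {u δ q : ℝ} (hu : 0 ≤ u)
    (hδ : 0 ≤ δ) (hq : 0 ≤ q) (hδq : 2 ≤ δ * q ^ 2) :
    Integrable (fun t : ℝ => shiftIntegrand u δ (((1 / 2 : ℝ) : ℂ) + t * I)) ∧
    ‖∫ t : ℝ, shiftIntegrand u δ (((1 / 2 : ℝ) : ℂ) + t * I)‖ ≤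
      16531.2 * Real.exp (-(2 / 5) * u) * δ * (5 + 8 * q) := by
  obtain ⟨-, hi, he⟩ := integral_vertical_line_eq (a := -(2 / 5)) (b := 1 / 2) (r := 7 / 4)
    (by norm_num) (by norm_num) (differentiableOn_shiftIntegrand hRH u δ)
    fun s hs him => norm_shiftIntegrand_le_of_one_le hRH hu hδ hs him
  refine ⟨hi, ?_⟩
  rw [he]
  obtain ⟨hφ, hv⟩ := integral_ite_abs_le (16531.2 * Real.exp (-(2 / 5) * u) * δ * (5 / 2))
    (16531.2 * Real.exp (-(2 / 5) * u) * δ * q)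
  refine (norm_integral_le_of_norm_le hφ (Eventually.of_forall fun t =>
    norm_shiftIntegrand_left_line_le hRH hδ hq hδq t)).trans_eq ?_
  rw [hv]
  ring

lemma integrable_exp_mul_inv_pow_half_line (k : ℕ) (v : ℝ) :
    Integrable fun t : ℝ => exp ((((1 / 2 : ℝ) : ℂ) + t * I) * v) *
      ((((1 / 2 : ℝ) : ℂ) + t * I) ^ (k + 2))⁻¹ := by
  refine (integrable_inv_pow_half_line k).bdd_mul (c := Real.exp (v / 2))
    (Continuous.aestronglyMeasurable (by fun_prop)) (Eventually.of_forall fun t => ?_)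
  rw [norm_exp]
  refine Real.exp_le_exp.2 (le_of_eq ?_)
  simp
  ring

lemma integrable_LSeries_vonMangoldtLog_mul_exp (v : ℝ) :
    Integrable fun t : ℝ => LSeries vonMangoldtLog (1 + (((1 / 2 : ℝ) : ℂ) + t * I)) *
      (exp ((((1 / 2 : ℝ) : ℂ) + t * I) * v) * ((((1 / 2 : ℝ) : ℂ) + t * I) ^ 2)⁻¹) := by
  have hre : ∀ t : ℝ, (1 + (((1 / 2 : ℝ) : ℂ) + t * I)).re = 3 / 2 := by
    intro t; simp; norm_num
  have habs : LSeries.abscissaOfAbsConv vonMangoldtLog ≤ (1 : ℝ) :=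
    LSeries.abscissaOfAbsConv_le_of_forall_lt_LSeriesSummable fun y hy =>
      LSeriesSummable_vonMangoldtLog (by simpa using hy)
  have hcont : Continuous fun t : ℝ =>
      LSeries vonMangoldtLog (1 + (((1 / 2 : ℝ) : ℂ) + t * I)) := by
    refine (LSeries_differentiableOn vonMangoldtLog).continuousOn.comp_continuous (by fun_prop)
      fun t => ?_
    change _ < (_ : EReal)
    rw [hre]
    exact habs.trans_lt (by norm_cast; norm_num)
  refine (integrable_exp_mul_inv_pow_half_line 0 v).bdd_mul
    (c := ∑' n, ‖LSeries.term vonMangoldtLog (3 / 2 : ℝ) n‖) hcont.aestronglyMeasurable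
    (Eventually.of_forall fun t => ?_)
  have hn : ∀ n, ‖LSeries.term vonMangoldtLog (1 + (((1 / 2 : ℝ) : ℂ) + t * I)) n‖
      = ‖LSeries.term vonMangoldtLog (3 / 2 : ℝ) n‖ := fun n => by
    rw [LSeries.norm_term_eq, LSeries.norm_term_eq, hre, ofReal_re]
  have hs := (LSeriesSummable_vonMangoldtLog (s := (3 / 2 : ℝ)) (by norm_num)).norm
  rw [LSeries]
  refine (norm_tsum_le_tsum_norm ?_).trans_eq (tsum_congr hn)
  simpa only [hn] using hs

lemma integral_LSeries_vonMangoldtLog_sub (hRH : RiemannHypothesis) {u δ q : ℝ} (hu : 0 ≤ u)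
    (hδ : 0 ≤ δ) (hq : 0 ≤ q) (hδq : 2 ≤ δ * q ^ 2) :
    (∫ t : ℝ, LSeries vonMangoldtLog (1 + (((1 / 2 : ℝ) : ℂ) + t * I)) *
        (exp ((((1 / 2 : ℝ) : ℂ) + t * I) * ((u + δ : ℝ) : ℂ)) *
          ((((1 / 2 : ℝ) : ℂ) + t * I) ^ 2)⁻¹)) -
      (∫ t : ℝ, LSeries vonMangoldtLog (1 + (((1 / 2 : ℝ) : ℂ) + t * I)) *
        (exp ((((1 / 2 : ℝ) : ℂ) + t * I) * u) * ((((1 / 2 : ℝ) : ℂ) + t * I) ^ 2)⁻¹)) =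
      ((2 * Real.pi * (((u + δ) ^ 3 - u ^ 3) / 6) : ℝ) : ℂ) +
      ((2 * Real.pi * δ : ℝ) : ℂ) * deriv (logDeriv riemannZeta₁) 1 +
      ∫ t : ℝ, shiftIntegrand u δ (((1 / 2 : ℝ) : ℂ) + t * I) := by
  have hS := (norm_integral_shiftIntegrand_le hRH hu hδ hq hδq).1
  have hv : 0 ≤ u + δ := add_nonneg hu hδ
  have hid : ∀ t : ℝ, LSeries vonMangoldtLog (1 + (((1 / 2 : ℝ) : ℂ) + t * I)) *
        (exp ((((1 / 2 : ℝ) : ℂ) + t * I) * ((u + δ : ℝ) : ℂ)) *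
          ((((1 / 2 : ℝ) : ℂ) + t * I) ^ 2)⁻¹) -
      LSeries vonMangoldtLog (1 + (((1 / 2 : ℝ) : ℂ) + t * I)) *
        (exp ((((1 / 2 : ℝ) : ℂ) + t * I) * u) * ((((1 / 2 : ℝ) : ℂ) + t * I) ^ 2)⁻¹) =
      (exp ((((1 / 2 : ℝ) : ℂ) + t * I) * ((u + δ : ℝ) : ℂ)) *
          ((((1 / 2 : ℝ) : ℂ) + t * I) ^ (2 + 2))⁻¹ -
        exp ((((1 / 2 : ℝ) : ℂ) + t * I) * u) * ((((1 / 2 : ℝ) : ℂ) + t * I) ^ (2 + 2))⁻¹) +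
      (deriv (logDeriv riemannZeta₁) 1 *
        (exp ((((1 / 2 : ℝ) : ℂ) + t * I) * ((u + δ : ℝ) : ℂ)) *
          ((((1 / 2 : ℝ) : ℂ) + t * I) ^ (0 + 2))⁻¹) -
        deriv (logDeriv riemannZeta₁) 1 *
        (exp ((((1 / 2 : ℝ) : ℂ) + t * I) * u) * ((((1 / 2 : ℝ) : ℂ) + t * I) ^ (0 + 2))⁻¹)) +
      shiftIntegrand u δ (((1 / 2 : ℝ) : ℂ) + t * I) := by
    intro t
    rw [LSeries_vonMangoldtLog (by simp), shiftIntegrand_of_ne u δ (half_add_mul_I_ne_zero t),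
      add_sub_cancel_left, zero_add, pow_add, mul_inv]
    ring
  have i1 := integrable_exp_mul_inv_pow_half_line 2 (u + δ)
  have i2 := integrable_exp_mul_inv_pow_half_line 2 u
  have i3 := (integrable_exp_mul_inv_pow_half_line 0 (u + δ)).const_mul
    (deriv (logDeriv riemannZeta₁) 1)
  have i4 := (integrable_exp_mul_inv_pow_half_line 0 u).const_mul (deriv (logDeriv riemannZeta₁) 1)
  rw [← integral_sub (integrable_LSeries_vonMangoldtLog_mul_exp _)
    (integrable_LSeries_vonMangoldtLog_mul_exp _), integral_congr_ae (Eventually.of_forall hid)]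
  refine (integral_add ((i1.sub i2).add (i3.sub i4)) hS).trans ?_
  rw [integral_add' (i1.sub i2) (i3.sub i4), integral_sub' i1 i2, integral_sub' i3 i4,
    integral_const_mul, integral_const_mul,
    integral_exp_mul_div_pow, integral_exp_mul_div_pow, integral_exp_mul_div_pow,
    integral_exp_mul_div_pow, max_eq_left hu, max_eq_left hv]
  norm_num [Nat.factorial]
  ring

lemma sum_log_sq_div_prime_le (hRH : RiemannHypothesis) {x δ q : ℝ} (hx : 1 ≤ x)
    (hδ : 0 < δ) (hq : 0 ≤ q) (hδq : 2 ≤ δ * q ^ 2) :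
    ∑ p ∈ (Finset.Iic ⌊x⌋₊).filter Nat.Prime, Real.log p ^ 2 / (p : ℝ) ≤
      ((Real.log x + δ) ^ 3 - Real.log x ^ 3) / (6 * δ) + 0.486 +
      16531.2 / (2 * Real.pi) * Real.exp (-(2 / 5) * Real.log x) * (5 + 8 * q) := by
  set u := Real.log x with hu_def
  have hu : 0 ≤ u := Real.log_nonneg hx
  have hπ := Real.pi_pos
  have hS := (norm_integral_shiftIntegrand_le hRH hu hδ.le hq hδq).2
  have hI := congrArg re (integral_LSeries_vonMangoldtLog_sub hRH hu hδ.le hq hδq)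
  have hsum := (hasSum_vonMangoldtLog_mul_max (u + δ)).sub (hasSum_vonMangoldtLog_mul_max u)
  rw [sub_re] at hI
  rw [hI] at hsum
  have hle := sum_le_hasSum ((Finset.Iic ⌊x⌋₊).filter Nat.Prime) (fun n _ => ?_) hsum
  · have hterm : ∀ p ∈ (Finset.Iic ⌊x⌋₊).filter Nat.Prime,
        2 * Real.pi * (ArithmeticFunction.vonMangoldt p * Real.log p / p *
          max (u + δ - Real.log p) 0) -
        2 * Real.pi * (ArithmeticFunction.vonMangoldt p * Real.log p / p *
          max (u - Real.log p) 0) = 2 * Real.pi * δ * (Real.log p ^ 2 / (p : ℝ)) := by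
      intro p hp
      rw [Finset.mem_filter, Finset.mem_Iic] at hp
      have hpx : (p : ℝ) ≤ x := (Nat.le_floor_iff (by linarith)).1 hp.1
      have hp0 : (0 : ℝ) < p := by exact_mod_cast hp.2.pos
      have hlog : Real.log p ≤ u := Real.log_le_log hp0 hpx
      rw [ArithmeticFunction.vonMangoldt_apply_prime hp.2, max_eq_left (by linarith),
        max_eq_left (by linarith)]
      ring
    rw [Finset.sum_congr rfl hterm, ← Finset.mul_sum, add_re, add_re, re_ofReal_mul,
      ofReal_re] at hle
    have h1 := (re_le_norm _).trans hS
    have h2 := re_deriv_logDeriv_riemannZeta₁_one_le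
    have h3 : 0 < 2 * Real.pi * δ := by positivity
    refine le_of_mul_le_mul_left (hle.trans ?_) h3
    have h4 := mul_le_mul_of_nonneg_left h2 h3.le
    refine (add_le_add (add_le_add le_rfl h4) h1).trans_eq ?_
    field_simp
  · rw [← mul_sub, ← mul_sub]
    have : 0 ≤ max (u + δ - Real.log n) 0 - max (u - Real.log n) 0 :=
      sub_nonneg.2 (max_le_max (by linarith) le_rfl)
    have := ArithmeticFunction.vonMangoldt_nonneg (n := n)
    have := Real.log_natCast_nonneg n
    positivity

lemma log_ten_pow_mem_Icc : Real.log ((10 : ℝ) ^ 13) ∈ Icc 27 30.05 := by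
  have h1 := Real.log_two_gt_d9
  have h2 := Real.log_two_lt_d9
  have h3 := Real.log_le_log (by norm_num) (show (10 : ℝ) ^ 3 ≤ 2 ^ 10 by norm_num)
  have h4 := Real.log_le_log (by norm_num) (show (2 : ℝ) ^ 39 ≤ 10 ^ 13 by norm_num)
  simp only [Real.log_pow] at h3 h4 ⊢
  norm_num at h3 h4 h1 h2 ⊢
  constructor <;> linarith

lemma exp_neg_mul_log_ten_pow_le :
    Real.exp (-(2 / 5) * Real.log ((10 : ℝ) ^ 13)) ≤ 6.32e-6 := by
  refine le_of_pow_le_pow_left₀ (n := 5) (by norm_num) (by norm_num) ?_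
  rw [← Real.exp_nat_mul]
  have : (5 : ℕ) * (-(2 / 5) * Real.log ((10 : ℝ) ^ 13)) = Real.log (((10 : ℝ) ^ 26)⁻¹) := by
    rw [Real.log_inv, Real.log_pow, Real.log_pow]
    push_cast
    ring
  rw [this, Real.exp_log (by norm_num)]
  norm_num

lemma exp_neg_mul_mul_add_le {L u : ℝ} (hL : 0 ≤ L) (hu : L ≤ u) :
    Real.exp (-(2 / 5) * u) * (13 + u) ≤ Real.exp (-(2 / 5) * L) * (13 + L) := by
  have h1 := Real.add_one_le_exp ((2 / 5) * (u - L))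
  have h2 : 13 + u ≤ Real.exp ((2 / 5) * (u - L)) * (13 + L) := by nlinarith
  refine (mul_le_mul_of_nonneg_left h2 (Real.exp_pos _).le).trans_eq ?_
  rw [← mul_assoc, ← Real.exp_add]
  ring_nf

end

/-- Assuming RH, for `x ≥ 10^13` we have `∑_{p ≤ x} (log p)²/p < (log x)²/2 + 3.5402`. -/
theorem sum_log_sq_div_p_lt (hRH : RiemannHypothesis) (x : ℝ)
    (hx : (10 : ℝ) ^ (13 : ℕ) ≤ x) :
    ∑ p ∈ (Finset.Iic ⌊x⌋₊).filter Nat.Prime, Real.log p ^ 2 / (p : ℝ) <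
      Real.log x ^ 2 / 2 + 3.5402 := by
  obtain ⟨hL1, hL2⟩ := log_ten_pow_mem_Icc
  have hLu := Real.log_le_log (by norm_num) hx
  have hu : 27 ≤ Real.log x := hL1.trans hLu
  have hu0 : 0 < Real.log x := by linarith
  have key := sum_log_sq_div_prime_le hRH (x := x) (δ := 4 / Real.log x)
    (q := Real.log x / 8 + 1) (le_trans (by norm_num) hx) (by positivity) (by positivity) (by
      rw [div_mul_eq_mul_div, le_div_iff₀ hu0]
      nlinarith [sq_nonneg (Real.log x / 8 - 1)])
  have hexp := (exp_neg_mul_mul_add_le (by linarith) hLu).trans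
    (mul_le_mul exp_neg_mul_log_ten_pow_le (add_le_add_right hL2 13) (by linarith) (by norm_num))
  generalize Real.log x = u at *
  have hπ : 16531.2 / (2 * Real.pi) ≤ 2633 := by
    rw [div_le_iff₀ (by positivity)]
    linarith [Real.pi_gt_d2]
  have hmain : ((u + 4 / u) ^ 3 - u ^ 3) / (6 * (4 / u)) = u ^ 2 / 2 + 2 + 8 / 3 * (1 / u) ^ 2 := by
    field_simp
    ring
  have hsq : (1 / u) ^ 2 ≤ (1 / 27) ^ 2 := by gcongr
  have herr := mul_le_mul hπ hexp (by positivity) (by norm_num)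
  rw [hmain, mul_assoc, show 5 + 8 * (u / 8 + 1) = 13 + u by ring] at key
  norm_num at hsq herr key ⊢
  linarith
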